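/- arXiv:1902.05195 — 3 statements merged into one kernel-verified Lean document; each statement's English description precedes it below -/
import Mathlib

section
/- Let p and q be distinct primes, let b be a positive integer, set n = q^b, and let r be a positive integer with gcd(r, pq) = 1. Let ζ = e^{2πi/(pr)} ∈ ℂ and suppose Y ∈ ℤ[ζ] satisfies Y·conj(Y) = n, where conj denotes complex conjugation. If the multiplicative order of q modulo p is even and p > max(3^{n/2}, n² + n + 1), then there exists a root of unity η ∈ ℂ such that Y·η ∈ ℤ[e^{2πi/r}]. -/
open Complex


theorem prod_le_exp_sum {ι : Type*} [Fintype ι] (z : ι → ℝ) (hz : ∀ i, 0 ≤ z i) :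
    ∏ i, z i ≤ Real.exp (∑ i, z i - Fintype.card ι) := by
  have h : ∑ i, z i - (Fintype.card ι : ℝ) = ∑ i, (z i - 1) := by
    simp [Finset.sum_sub_distrib]
  rw [h, Real.exp_sum]
  refine Finset.prod_le_prod (fun i _ => hz i) (fun i _ => ?_)
  have := Real.add_one_le_exp (z i - 1)
  linarith

theorem det_bound {ι : Type*} [Fintype ι] [DecidableEq ι] (A : Matrix ι ι ℝ)
    (h : ∀ i, ∑ j, A i j ^ 2 ≤ 9) : |A.det| ≤ 3 ^ Fintype.card ι := by
  have hP : (A * A.conjTranspose).PosSemidef := Matrix.posSemidef_self_mul_conjTranspose A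
  have hd : A.det ^ 2 = ∏ i, hP.isHermitian.eigenvalues i := by
    have := hP.isHermitian.det_eq_prod_eigenvalues
    rw [Matrix.det_mul, Matrix.det_conjTranspose] at this
    simpa [sq] using this
  have ht : ∑ i, hP.isHermitian.eigenvalues i ≤ 9 * Fintype.card ι := by
    have := hP.isHermitian.trace_eq_sum_eigenvalues
    have h2 : (A * A.conjTranspose).trace = ∑ i, ∑ j, A i j ^ 2 := by
      simp [Matrix.trace, Matrix.mul_apply, sq]
    rw [h2] at this
    have h3 : ∑ i, ∑ j, A i j ^ 2 ≤ ∑ i : ι, (9 : ℝ) := Finset.sum_le_sum fun i _ => h i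
    simp only [RCLike.ofReal_real_eq_id, id] at this
    rw [← this]
    refine h3.trans (by simp [mul_comm])
  have h1 := prod_le_exp_sum (fun i => hP.isHermitian.eigenvalues i / 9)
    (fun i => div_nonneg (hP.eigenvalues_nonneg i) (by norm_num))
  rw [Finset.prod_div_distrib, ← hd, ← Finset.sum_div] at h1
  have h4 : Real.exp ((∑ i, hP.isHermitian.eigenvalues i) / 9 - Fintype.card ι) ≤ 1 := by
    rw [Real.exp_le_one_iff]
    linarith
  have h5 := h1.trans h4
  rw [Finset.prod_const, Finset.card_univ, div_le_one (by positivity)] at h5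
  refine abs_le_of_sq_le_sq ?_ (by positivity)
  rw [← pow_mul, mul_comm, pow_mul]
  norm_num
  exact h5

/-- Key lemma: a non-singular small relation matrix bounds `p`. -/
theorem key_bound {ι : Type*} [Fintype ι] [DecidableEq ι] (p : ℕ) [Fact p.Prime]
    (B : Matrix ι ι ℤ) (A : Matrix ι ι ℝ) (k : ι → ℕ)
    (hBA : ∀ i j, (B i j : ℝ) = A i j * 3 ^ k j)
    (h : ∀ i, ∑ j, A i j ^ 2 ≤ 9) (z : ι → ZMod p) (hz : z ≠ 0)
    (hB : ∀ i, ∑ j, (B i j : ZMod p) * z j = 0) (hA : A.det ≠ 0) :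
    p ≤ 3 ^ (∑ j, (k j + 1)) := by
  have h1 : B.map (Int.cast : ℤ → ℝ) = A * Matrix.diagonal (fun j => (3 : ℝ) ^ k j) := by
    ext i j
    simp [hBA]
  have h2 : (B.det : ℝ) = A.det * ∏ j, (3 : ℝ) ^ k j := by
    rw [Int.cast_det, ]
    rw [h1, Matrix.det_mul, Matrix.det_diagonal]
  have h3 : ((B.det : ℤ) : ZMod p) = 0 := by
    rw [Int.cast_det]
    apply Matrix.exists_mulVec_eq_zero_iff.1
    refine ⟨z, hz, ?_⟩
    ext i
    simpa [Matrix.mulVec, dotProduct] using hB i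
  rw [ZMod.intCast_zmod_eq_zero_iff_dvd] at h3
  have h4 : B.det ≠ 0 := by
    intro h0
    rw [h0] at h2
    have : (∏ j, (3 : ℝ) ^ k j) ≠ 0 := by positivity
    simp_all
  have h5 := Int.le_of_dvd (abs_pos.2 h4) ((dvd_abs _ _).2 h3)
  have h6 : ((p : ℤ) : ℝ) ≤ 3 ^ (∑ j, (k j + 1)) := by
    calc ((p : ℤ) : ℝ) ≤ ((|B.det| : ℤ) : ℝ) := by exact_mod_cast h5
      _ = |A.det| * ∏ j, (3 : ℝ) ^ k j := by
        rw [Int.cast_abs, h2, abs_mul, abs_of_pos (a := ∏ j, (3 : ℝ) ^ k j) (by positivity)]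
      _ ≤ 3 ^ Fintype.card ι * ∏ j, (3 : ℝ) ^ k j := by
        gcongr
        exact det_bound A h
      _ = _ := by
        rw [Finset.prod_pow_eq_pow_sum, ← pow_add, Finset.sum_add_distrib, add_comm]
        simp
  exact_mod_cast h6

theorem sum_sq_three {ι : Type*} [Fintype ι] [DecidableEq ι] (a b c : ι) (x y z : ℝ) :
    ∑ j, ((Pi.single a x : ι → ℝ) j - (Pi.single b y : ι → ℝ) j - (Pi.single c z : ι → ℝ) j) ^ 2 =
      x ^ 2 + y ^ 2 + z ^ 2 - (if a = b then 2 * x * y else 0) - (if a = c then 2 * x * z else 0)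
        + (if b = c then 2 * y * z else 0) := by
  have : ∀ j, ((Pi.single a x : ι → ℝ) j - (Pi.single b y : ι → ℝ) j
      - (Pi.single c z : ι → ℝ) j) ^ 2 =
      (if j = a then x ^ 2 else 0) + (if j = b then y ^ 2 else 0) + (if j = c then z ^ 2 else 0)
      - (if j = a then (if a = b then 2 * x * y else 0) else 0)
      - (if j = a then (if a = c then 2 * x * z else 0) else 0)
      + (if j = b then (if b = c then 2 * y * z else 0) else 0) := by
    intro j
    simp only [Pi.single_apply]
    split_ifs <;> subst_vars <;> first | (exfalso; simp_all; done) | ring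
  simp only [this, Finset.sum_add_distrib, Finset.sum_sub_distrib, Finset.sum_ite_eq',
    Finset.mem_univ, if_true]

theorem balanced_bound (p : ℕ) [Fact p.Prime] : ∀ (N : ℕ) (I : Finset (ZMod p)), I.card ≤ N →
    I.Nonempty → (∀ v ∈ I, ∃ t ∈ I, ∃ u ∈ I, t ≠ u ∧ t + u = 2 * v) → p ≤ 3 ^ I.card := by
  intro N
  induction N with
  | zero =>
    intro I hI hne
    have := hne.card_pos
    omega
  | succ N ih =>
    intro I hI hne hbal
    obtain ⟨j0, hj0⟩ := hne
    choose! t ht u hu htu hsum using hbal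
    let T : I → I := fun v => ⟨t v, ht v v.2⟩
    let U : I → I := fun v => ⟨u v, hu v v.2⟩
    let J : I := ⟨j0, hj0⟩
    let A : Matrix I I ℝ := fun v => if v = J then Pi.single J 1 else
      fun j => (Pi.single v 2 : I → ℝ) j - (Pi.single (T v) 1 : I → ℝ) j
        - (Pi.single (U v) 1 : I → ℝ) j
    let B : Matrix I I ℤ := fun v => if v = J then Pi.single J 1 else
      fun j => (Pi.single v 2 : I → ℤ) j - (Pi.single (T v) 1 : I → ℤ) j
        - (Pi.single (U v) 1 : I → ℤ) j
    have hTU : ∀ v, T v ≠ U v := fun v h => htu v v.2 (congrArg Subtype.val h)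
    have hTv : ∀ v, v ≠ T v := by
      intro v h
      have h1 : (v : ZMod p) = t v := congrArg Subtype.val h
      have h2 := hsum v v.2
      apply htu v v.2
      linear_combination -2 * h1 - h2
    have hUv : ∀ v, v ≠ U v := by
      intro v h
      have h1 : (v : ZMod p) = u v := congrArg Subtype.val h
      have h2 := hsum v v.2
      apply htu v v.2
      linear_combination h2 + 2 * h1
    by_cases hA : A.det = 0
    · obtain ⟨y, hy0, hy⟩ := Matrix.exists_mulVec_eq_zero_iff.2 hA
      have hyJ : y J = 0 := by
        have := congrFun hy J
        simpa [Matrix.mulVec, dotProduct, A, Pi.single_apply] using this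
      have hyv : ∀ v, v ≠ J → 2 * y v = y (T v) + y (U v) := by
        intro v hv
        have := congrFun hy v
        simp only [Matrix.mulVec, dotProduct, A, hv, if_false, sub_mul, Finset.sum_sub_distrib,
          Pi.single_apply, ite_mul, zero_mul, Finset.sum_ite_eq', Finset.mem_univ, if_true,
          Pi.zero_apply] at this
        linarith
      obtain ⟨x, hx0, hxJ, hxv⟩ : ∃ x : I → ℝ, (∃ v, 0 < x v) ∧ x J = 0 ∧
          ∀ v, v ≠ J → 2 * x v = x (T v) + x (U v) := by
        obtain ⟨v, hv⟩ := Function.ne_iff.1 hy0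
        rcases lt_or_gt_of_ne hv with h | h
        · refine ⟨fun i => - y i, ⟨v, by simpa using h⟩, by simp [hyJ], fun i hi => ?_⟩
          have := hyv i hi
          linarith
        · exact ⟨y, ⟨v, h⟩, hyJ, hyv⟩
      obtain ⟨w, -, hw⟩ := Finset.exists_max_image Finset.univ x ⟨J, Finset.mem_univ _⟩
      have hwpos : 0 < x w := by
        obtain ⟨v, hv⟩ := hx0
        exact hv.trans_le (hw v (Finset.mem_univ _))
      let I' : Finset (ZMod p) := (Finset.univ.filter fun v : I => x v = x w).map
        (Function.Embedding.subtype _)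
      have hmem : ∀ v : I, x v = x w → (v : ZMod p) ∈ I' := by
        intro v hv
        simp [I', hv]
      have hsub : I' ⊆ I := by
        intro v hv
        simp only [I', Finset.mem_map, Finset.mem_filter] at hv
        obtain ⟨a, _, rfl⟩ := hv
        exact a.2
      have hlt : I'.card < I.card := by
        apply Finset.card_lt_card
        refine ⟨hsub, fun h => ?_⟩
        have := h hj0
        simp only [I', Finset.mem_map, Finset.mem_filter] at this
        obtain ⟨a, ⟨_, ha⟩, ha'⟩ := this
        have : a = J := Subtype.ext ha'
        rw [this, hxJ] at ha
        linarith
      refine (ih I' (by omega) ⟨w, hmem w rfl⟩ ?_).trans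
        (Nat.pow_le_pow_right (by norm_num) hlt.le)
      intro v hv
      simp only [I', Finset.mem_map, Finset.mem_filter] at hv
      obtain ⟨a, ⟨_, ha⟩, rfl⟩ := hv
      have haJ : a ≠ J := by
        rintro rfl
        linarith
      have h1 := hxv a haJ
      have h2 := hw (T a) (Finset.mem_univ _)
      have h3 := hw (U a) (Finset.mem_univ _)
      refine ⟨T a, hmem _ (by linarith), U a, hmem _ (by linarith), htu a a.2, hsum a a.2⟩
    · have := key_bound p B A (fun _ => 0) ?_ ?_ (fun v => (v : ZMod p) - j0) ?_ ?_ hA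
      · simpa using this
      · intro i j
        by_cases h : i = J
        · simp [A, B, h, Pi.single_apply]
        · simp [A, B, h, Pi.single_apply]
      · intro i
        by_cases h : i = J
        · simp [A, h, Pi.single_apply]
        · simp only [A, h, if_false, sum_sq_three, hTv, hUv, hTU]
          norm_num
      · intro h0
        have h1 := congrFun h0 (T J)
        have : t j0 = j0 := sub_eq_zero.1 h1
        exact hTv J (Subtype.ext this.symm)
      · intro i
        by_cases h : i = J
        · simp [B, h, Pi.single_apply, J]
        · simp only [B, h, if_false]
          have h2 := hsum i i.2
          push_cast
          simp only [sub_mul, Finset.sum_sub_distrib, Pi.single_apply, Int.cast_ite, Int.cast_zero,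
            ite_mul, zero_mul, Finset.sum_ite_eq', Finset.mem_univ, if_true, T, U]
          push_cast
          linear_combination -h2


/-- absolute value representative mod `±1`. -/
def abz {p : ℕ} (x : ZMod p) : ZMod p := if 2 * x.val < p then x else -x
/-- sign of a residue. -/
def sgz {p : ℕ} (x : ZMod p) : ℤ := if 2 * x.val < p then 1 else -1

theorem sgz_mul_abz {p : ℕ} (x : ZMod p) : (sgz x : ZMod p) * abz x = x := by
  unfold sgz abz
  split_ifs <;> simp

theorem pos_neg_iff {p : ℕ} [Fact p.Prime] (hp2 : p ≠ 2) (x : ZMod p) (hx : x ≠ 0) :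
    2 * (-x).val < p ↔ ¬ 2 * x.val < p := by
  have hodd := (Fact.out : p.Prime).eq_two_or_odd.resolve_left hp2
  have h1 : (-x).val = p - x.val := by
    rw [ZMod.neg_val, if_neg hx]
  have h2 := ZMod.val_lt x
  rw [h1]
  omega

theorem abz_pos {p : ℕ} [Fact p.Prime] (hp2 : p ≠ 2) (x : ZMod p) (hx : x ≠ 0) :
    2 * (abz x).val < p := by
  unfold abz
  split_ifs with h
  · exact h
  · exact (pos_neg_iff hp2 x hx).2 h

theorem abz_of_pos {p : ℕ} (x : ZMod p) (hx : 2 * x.val < p) : abz x = x := by simp [abz, hx]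
theorem sgz_of_pos {p : ℕ} (x : ZMod p) (hx : 2 * x.val < p) : sgz x = 1 := by simp [sgz, hx]

theorem abz_neg {p : ℕ} [Fact p.Prime] (hp2 : p ≠ 2) (x : ZMod p) : abz (-x) = abz x := by
  by_cases hx : x = 0
  · simp [hx]
  · unfold abz
    simp only [pos_neg_iff hp2 x hx]
    split_ifs <;> simp_all

theorem sgz_neg {p : ℕ} [Fact p.Prime] (hp2 : p ≠ 2) (x : ZMod p) (hx : x ≠ 0) :
    sgz (-x) = - sgz x := by
  unfold sgz
  simp only [pos_neg_iff hp2 x hx]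
  split_ifs <;> simp_all

theorem abz_eq_or {p : ℕ} (x : ZMod p) : abz x = x ∨ abz x = -x := by
  unfold abz; split_ifs <;> simp

theorem eq_or_of_abz_eq {p : ℕ} (x y : ZMod p) (h : abz x = abz y) : x = y ∨ x = -y := by
  rcases abz_eq_or x with h1 | h1 <;> rcases abz_eq_or y with h2 | h2
  · left; rw [← h1, ← h2, h]
  · right; rw [← h1, ← h2, h]
  · right; rw [← h2, ← h, h1, neg_neg]
  · left; rw [← neg_inj, ← h1, ← h2, h]

theorem abs_sgz {p : ℕ} (x : ZMod p) : |(sgz x : ℝ)| = 1 := by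
  unfold sgz; split_ifs <;> simp

theorem card_half {p : ℕ} [Fact p.Prime] (hp2 : p ≠ 2) (S : Finset (ZMod p)) (h0 : 0 ∉ S)
    (hneg : ∀ s ∈ S, -s ∈ S) : S.card = 2 * (S.filter fun x => 2 * x.val < p).card := by
  have h1 := Finset.card_filter_add_card_filter_not (s := S) (fun x => 2 * x.val < p)
  have h2 : (S.filter fun x => ¬ 2 * x.val < p).card = (S.filter fun x => 2 * x.val < p).card := by
    apply Finset.card_bij (fun x _ => -x)
    · intro x hx
      rw [Finset.mem_filter] at hx ⊢
      exact ⟨hneg x hx.1, (pos_neg_iff hp2 x (fun h => h0 (h ▸ hx.1))).2 hx.2⟩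
    · intro x _ y _ h
      exact neg_inj.1 h
    · intro x hx
      rw [Finset.mem_filter] at hx
      refine ⟨-x, ?_, neg_neg x⟩
      rw [Finset.mem_filter]
      refine ⟨hneg x hx.1, ?_⟩
      rw [pos_neg_iff hp2 x (fun h => h0 (h ▸ hx.1))]
      exact not_not.2 hx.2
  omega

theorem exists_depth {p : ℕ} [Fact p.Prime] (hp2 : p ≠ 2) (hp3 : p ≠ 3)
    (S : Finset (ZMod p)) (h0 : 0 ∉ S)
    (hneg : ∀ s ∈ S, -s ∈ S) (hbig : 3 ^ (S.filter fun x => 2 * x.val < p).card < p)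
    (s : ZMod p) (hs : s ∈ S) : ∃ d : ℕ, 3 ^ (d + 1) * s ∉ S ∧ ∀ j ≤ d, 3 ^ j * s ∈ S := by
  classical
  have hex : ∃ d : ℕ, 3 ^ (d + 1) * s ∉ S := by
    by_contra! hall
    have hall' : ∀ d : ℕ, 3 ^ d * s ∈ S := by
      intro d
      cases d with
      | zero => simpa using hs
      | succ d => exact hall d
    set H := S.filter fun x => 2 * x.val < p with hH
    obtain ⟨i, hi, j, hj, hij, hij'⟩ := Finset.exists_ne_map_eq_of_card_lt_of_maps_to
      (s := Finset.range (H.card + 1)) (t := H) (f := fun d => abz (3 ^ d * s)) (by simp) (by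
        intro d _
        have hd := hall' d
        have hne : (3 ^ d * s : ZMod p) ≠ 0 := fun h => h0 (h ▸ hd)
        simp only [hH, Finset.coe_filter, Set.mem_ofPred_eq]
        refine ⟨?_, abz_pos hp2 _ hne⟩
        rcases abz_eq_or (3 ^ d * s) with h | h <;> rw [h]
        · exact hd
        · exact hneg _ hd)
    wlog hlt : i < j generalizing i j
    · exact this j hj i hi hij.symm hij'.symm (by omega)
    obtain ⟨e, rfl⟩ := Nat.exists_eq_add_of_lt hlt
    simp only [Finset.mem_range] at hi hj
    have hs0 : s ≠ 0 := fun h => h0 (h ▸ hs)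
    have h3 : (3 : ZMod p) ≠ 0 := by
      intro h
      have h' : ((3 : ℕ) : ZMod p) = 0 := by exact_mod_cast h
      rw [ZMod.natCast_eq_zero_iff] at h'
      exact hp3 ((Nat.prime_dvd_prime_iff_eq Fact.out Nat.prime_three).1 h')
    have h3i : (3 : ZMod p) ^ i ≠ 0 := pow_ne_zero _ h3
    have hpow : 3 ^ (e + 1) ≤ 3 ^ H.card := Nat.pow_le_pow_right (by norm_num) (by omega)
    have hodd := (Fact.out : p.Prime).eq_two_or_odd.resolve_left hp2
    have hodd3 : Odd (3 ^ (e + 1)) := Odd.pow (by decide)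
    have hgt : 1 < 3 ^ (e + 1) := Nat.one_lt_pow (by omega) (by norm_num)
    rcases eq_or_of_abz_eq _ _ hij' with h | h
    · have : (3 : ZMod p) ^ (e + 1) - 1 = 0 := by
        have : (3 : ZMod p) ^ i * s * (3 ^ (e + 1) - 1) = 0 := by
          rw [add_assoc, pow_add] at h
          linear_combination -h
        simpa [h3i, hs0] using this
      have h' : ((3 ^ (e + 1) - 1 : ℕ) : ZMod p) = 0 := by
        rw [Nat.cast_sub hgt.le]; push_cast; exact this
      rw [ZMod.natCast_eq_zero_iff] at h'
      have := Nat.le_of_dvd (by omega) h'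
      omega
    · have : (3 : ZMod p) ^ (e + 1) + 1 = 0 := by
        have : (3 : ZMod p) ^ i * s * (3 ^ (e + 1) + 1) = 0 := by
          rw [add_assoc, pow_add] at h
          linear_combination h
        simpa [h3i, hs0] using this
      have h' : ((3 ^ (e + 1) + 1 : ℕ) : ZMod p) = 0 := by
        push_cast; exact this
      rw [ZMod.natCast_eq_zero_iff] at h'
      have := Nat.le_of_dvd (by omega) h'
      have h7 : p = 3 ^ (e + 1) + 1 := by omega
      have := Nat.odd_iff.1 hodd3
      omega
  refine ⟨Nat.find hex, Nat.find_spec hex, fun j hj => ?_⟩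
  cases j with
  | zero => simpa using hs
  | succ j => exact not_not.1 (Nat.find_min hex (by omega))


theorem row_bound {ι : Type*} [Fintype ι] [DecidableEq ι] (c e f : ι) (y z : ℝ)
    (hy : |y| ≤ 1) (hz : |z| ≤ 1) (ha : e = c → |y| ≤ 1 / 3) (hb : f = c → |z| ≤ 1 / 3)
    (hc : e = f → |y| ≤ 1 / 3 ∨ |z| ≤ 1 / 3) :
    ∑ j, ((Pi.single c 2 : ι → ℝ) j - (Pi.single e y : ι → ℝ) j
      - (Pi.single f z : ι → ℝ) j) ^ 2 ≤ 9 := by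
  rw [sum_sq_three]
  simp only [abs_le] at *
  obtain ⟨hy1, hy2⟩ := hy
  obtain ⟨hz1, hz2⟩ := hz
  by_cases hce : e = c
  · obtain ⟨ha1, ha2⟩ := ha hce
    by_cases hcf : f = c
    · obtain ⟨hb1, hb2⟩ := hb hcf
      rw [if_pos hce.symm, if_pos hcf.symm, if_pos (hce.trans hcf.symm)]
      nlinarith
    · rw [if_pos hce.symm, if_neg (Ne.symm hcf), if_neg (fun h : e = f => hcf (h.symm.trans hce))]
      nlinarith
  · rw [if_neg (Ne.symm hce)]
    by_cases hcf : f = c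
    · obtain ⟨hb1, hb2⟩ := hb hcf
      rw [if_pos hcf.symm, if_neg (fun h : e = f => hce (h.trans hcf))]
      nlinarith
    · rw [if_neg (Ne.symm hcf)]
      by_cases hef : e = f
      · rw [if_pos hef]
        rcases hc hef with ⟨h1, h2⟩ | ⟨h1, h2⟩ <;> nlinarith
      · rw [if_neg hef]
        nlinarith

set_option maxHeartbeats 1000000 in
theorem symm_small {p : ℕ} [Fact p.Prime] (hp2 : p ≠ 2) (hp3 : p ≠ 3)
    (S : Finset (ZMod p)) (h0 : 0 ∉ S)
    (hneg : ∀ s ∈ S, -s ∈ S) (hbig : 3 ^ (S.filter fun x => 2 * x.val < p).card < p)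
    (hrel : ∀ s ∈ S, ∃ t u, (t = 0 ∨ t ∈ S) ∧ (u = 0 ∨ u ∈ S) ∧ t ≠ u ∧ t + u = 2 * s) :
    S = ∅ := by
  classical
  by_contra hSne
  have hne0 : ∀ s ∈ S, s ≠ 0 := fun s hs h => h0 (h ▸ hs)
  have h3 : (3 : ZMod p) ≠ 0 := by
    intro h
    have h' : ((3 : ℕ) : ZMod p) = 0 := by exact_mod_cast h
    rw [ZMod.natCast_eq_zero_iff] at h'
    exact hp3 ((Nat.prime_dvd_prime_iff_eq Fact.out Nat.prime_three).1 h')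
  have h2 : (2 : ZMod p) ≠ 0 := by
    intro h
    have h' : ((2 : ℕ) : ZMod p) = 0 := by exact_mod_cast h
    rw [ZMod.natCast_eq_zero_iff] at h'
    exact hp2 ((Nat.prime_dvd_prime_iff_eq Fact.out Nat.prime_two).1 h')
  have habS : ∀ s ∈ S, abz s ∈ S := by
    intro s hs
    rcases abz_eq_or s with h | h <;> rw [h]
    · exact hs
    · exact hneg _ hs
  set H := S.filter fun x => 2 * x.val < p with hH
  have habH : ∀ s ∈ S, abz s ∈ H := by
    intro s hs
    rw [hH, Finset.mem_filter]
    exact ⟨habS s hs, abz_pos hp2 s (hne0 s hs)⟩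
  choose! d hd1 hd2 using exists_depth hp2 hp3 S h0 hneg hbig
  have hduniq : ∀ s ∈ S, ∀ e, 3 ^ (e + 1) * s ∉ S → (∀ j ≤ e, 3 ^ j * s ∈ S) → d s = e := by
    intro s hs e he1 he2
    rcases lt_trichotomy (d s) e with h | h | h
    · exact absurd (he2 (d s + 1) h) (hd1 s hs)
    · exact h
    · exact absurd (hd2 s hs (e + 1) h) he1
  have hnegiff : ∀ s, -s ∈ S ↔ s ∈ S := fun s =>
    ⟨fun h => by simpa using hneg _ h, hneg s⟩
  have hdneg : ∀ s ∈ S, d (-s) = d s := by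
    intro s hs
    apply hduniq _ (hneg s hs)
    · rw [mul_neg, hnegiff]; exact hd1 s hs
    · intro j hj
      rw [mul_neg, hnegiff]; exact hd2 s hs j hj
  have hdab : ∀ s ∈ S, d (abz s) = d s := by
    intro s hs
    rcases abz_eq_or s with h | h <;> rw [h]
    exact hdneg s hs
  have hdmul : ∀ s ∈ S, ∀ l ≤ d s, d (3 ^ l * s) = d s - l := by
    intro s hs l hl
    apply hduniq _ (hd2 s hs l hl)
    · rw [← mul_assoc, ← pow_add]
      have : d s - l + 1 + l = d s + 1 := by omega
      rw [this]
      exact hd1 s hs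
    · intro j hj
      rw [← mul_assoc, ← pow_add]
      exact hd2 s hs _ (by omega)
  let R : Finset (ZMod p) := H.filter fun c => 3 * c ∉ S
  have hRS : ∀ c : R, (c : ZMod p) ∈ S := by
    intro c
    have := c.2
    simp only [R, hH, Finset.mem_filter] at this
    exact this.1.1
  have hRpos : ∀ c : R, 2 * (c : ZMod p).val < p := by
    intro c
    have := c.2
    simp only [R, hH, Finset.mem_filter] at this
    exact this.1.2
  have hR3 : ∀ c : R, 3 * (c : ZMod p) ∉ S := by
    intro c
    have := c.2
    simp only [R, hH, Finset.mem_filter] at this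
    exact this.2
  have hcl : ∀ s ∈ S, abz (3 ^ d s * s) ∈ R := by
    intro s hs
    have h := hd2 s hs (d s) le_rfl
    simp only [R, Finset.mem_filter]
    refine ⟨habH _ h, ?_⟩
    have h1 := hd1 s hs
    rw [pow_succ, mul_comm (3 ^ d s) 3, mul_assoc] at h1
    rcases abz_eq_or (3 ^ d s * s) with h | h <;> rw [h]
    · exact h1
    · rw [mul_neg, hnegiff]; exact h1
  obtain ⟨s0, hs0⟩ := Finset.nonempty_iff_ne_empty.2 hSne
  let c0 : R := ⟨_, hcl s0 hs0⟩
  let cl : ZMod p → R := fun s => if h : s ∈ S then ⟨abz (3 ^ d s * s), hcl s h⟩ else c0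
  have hclv : ∀ s ∈ S, (cl s : ZMod p) = abz (3 ^ d s * s) := by
    intro s hs
    simp [cl, hs]
  have hclneg : ∀ s ∈ S, cl (-s) = cl s := by
    intro s hs
    apply Subtype.ext
    rw [hclv _ hs, hclv _ (hneg s hs), hdneg s hs, mul_neg, abz_neg hp2]
  have hclab : ∀ s ∈ S, cl (abz s) = cl s := by
    intro s hs
    rcases abz_eq_or s with h | h <;> rw [h]
    exact hclneg s hs
  have hclmul : ∀ s ∈ S, ∀ l ≤ d s, cl (3 ^ l * s) = cl s := by
    intro s hs l hl
    apply Subtype.ext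
    rw [hclv _ hs, hclv _ (hd2 s hs l hl), hdmul s hs l hl, ← mul_assoc, ← pow_add]
    congr 3
    omega
  let fib : R → Finset (ZMod p) := fun c => H.filter fun s => cl s = c
  let k : R → ℕ := fun c => (fib c).card - 1
  have hdk' : ∀ s ∈ S, d s + 1 ≤ (fib (cl s)).card := by
    intro s hs
    rw [← Finset.card_range (d s + 1)]
    apply Finset.card_le_card_of_injOn (fun l => abz (3 ^ l * s))
    · intro l hl
      have hl' : l ≤ d s := by
        have := Finset.mem_coe.1 hl
        rw [Finset.mem_range] at this
        omega
      have hlS := hd2 s hs l hl'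
      simp only [fib, Finset.coe_filter, Set.mem_ofPred_eq]
      refine ⟨habH _ hlS, ?_⟩
      rw [hclab _ hlS, hclmul s hs l hl']
    · intro l hl l' hl' h
      simp only [Finset.coe_range, Set.mem_Iio] at hl hl'
      have h1 := congrArg d h
      simp only at h1
      rw [hdab _ (hd2 s hs l (by omega)), hdab _ (hd2 s hs l' (by omega)),
        hdmul s hs l (by omega), hdmul s hs l' (by omega)] at h1
      omega
  have hdk : ∀ s ∈ S, d s ≤ k (cl s) := by
    intro s hs
    have := hdk' s hs
    simp only [k]
    omega
  have hfibpos : ∀ c : R, 1 ≤ (fib c).card := by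
    intro c
    have h1 : d c = 0 := by
      apply hduniq _ (hRS c)
      · simpa using hR3 c
      · intro j hj
        have : j = 0 := by omega
        simpa [this] using hRS c
    have h2 : cl c = c := by
      apply Subtype.ext
      rw [hclv _ (hRS c), h1, pow_zero, one_mul, abz_of_pos _ (hRpos c)]
    have := hdk' c (hRS c)
    rw [h2] at this
    omega
  have hksum : ∑ c, (k c + 1) = H.card := by
    have h1 : ∀ c, k c + 1 = (fib c).card := by
      intro c
      have := hfibpos c
      simp only [k]
      omega
    simp only [h1]
    rw [Finset.card_eq_sum_card_fiberwise (f := cl) (t := Finset.univ) (fun _ _ => Finset.mem_coe.2 (Finset.mem_univ _))]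
  -- relations
  choose! t u ht hu htu hsum using hrel
  let C : R → ZMod p → R := fun c s => if s ∈ S then cl s else c
  let g : ZMod p → ℝ := fun s => if s ∈ S then sgz (3 ^ d s * s) * (1 / 3) ^ d s else 0
  let gi : ZMod p → ℤ := fun s => if s ∈ S then sgz (3 ^ d s * s) * 3 ^ (k (cl s) - d s) else 0
  have hgabs : ∀ s ∈ S, |g s| = (1 / 3) ^ d s := by
    intro s hs
    simp only [g, hs, if_true, abs_mul, abs_sgz, one_mul]
    rw [abs_of_pos (by positivity)]
  have hg1 : ∀ s, |g s| ≤ 1 := by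
    intro s
    by_cases hs : s ∈ S
    · rw [hgabs s hs]
      exact pow_le_one₀ (by norm_num) (by norm_num)
    · simp [g, hs]
  have hg3 : ∀ s, (s ∈ S → d s ≠ 0) → |g s| ≤ 1 / 3 := by
    intro s h
    by_cases hs : s ∈ S
    · rw [hgabs s hs]
      have h1 : 1 ≤ d s := Nat.one_le_iff_ne_zero.2 (h hs)
      calc (1 / 3 : ℝ) ^ d s ≤ (1 / 3) ^ 1 :=
            pow_le_pow_of_le_one (by norm_num) (by norm_num) h1
        _ = 1 / 3 := by norm_num
    · simp [g, hs]
  have hcne : ∀ c : R, (c : ZMod p) ≠ 0 := fun c => hne0 _ (hRS c)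
  have hkey : ∀ (c : R) (a b : ZMod p), (a = 0 ∨ a ∈ S) → (b = 0 ∨ b ∈ S) → a ≠ b →
      a + b = 2 * c → (C c a = c → |g a| ≤ 1 / 3) := by
    intro c a b ha hb hab hs hC
    apply hg3
    intro haS hda
    have h1 : abz a = c := by
      have := hclv a haS
      rw [hda, pow_zero, one_mul] at this
      rw [← this]
      simp only [C, haS, if_true] at hC
      rw [hC]
    have h4 : abz a = abz (c : ZMod p) := by rw [h1, abz_of_pos _ (hRpos c)]
    rcases eq_or_of_abz_eq _ _ h4 with h | h
    · apply hab
      linear_combination 2 * h - hs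
    · have hb3 : b = 3 * c := by linear_combination hs - h
      rcases hb with hb | hb
      · rw [hb] at hb3
        have := mul_ne_zero h3 (hcne c)
        exact this hb3.symm
      · exact hR3 c (hb3 ▸ hb)
  have hkey2 : ∀ (c : R) (a b : ZMod p), a ≠ b →
      a + b = 2 * c → C c a = C c b → (|g a| ≤ 1 / 3 ∨ |g b| ≤ 1 / 3) := by
    intro c a b hab hs hC
    by_cases haS : a ∈ S
    swap
    · left; exact hg3 a fun h => absurd h haS
    by_cases hbS : b ∈ S
    swap
    · right; exact hg3 b fun h => absurd h hbS
    by_cases hda : d a = 0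
    swap
    · left; exact hg3 a fun _ => hda
    right
    apply hg3
    intro _ hdb
    have h1 := hclv a haS
    have h1' := hclv b hbS
    simp only [C, haS, hbS, if_true] at hC
    rw [hda, pow_zero, one_mul] at h1
    rw [hdb, pow_zero, one_mul] at h1'
    have h4 : abz a = abz b := by rw [← h1, ← h1', hC]
    rcases eq_or_of_abz_eq _ _ h4 with h | h
    · exact hab h
    · rw [h, neg_add_cancel] at hs
      exact mul_ne_zero h2 (hcne c) hs.symm
  let A : Matrix R R ℝ := fun c j => (Pi.single c 2 : R → ℝ) j
    - (Pi.single (C c (t c)) (g (t c)) : R → ℝ) j - (Pi.single (C c (u c)) (g (u c)) : R → ℝ) j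
  let B : Matrix R R ℤ := fun c j => (Pi.single c (2 * 3 ^ k c) : R → ℤ) j
    - (Pi.single (C c (t c)) (gi (t c)) : R → ℤ) j - (Pi.single (C c (u c)) (gi (u c)) : R → ℤ) j
  have hgi : ∀ c s, (gi s : ℝ) = g s * 3 ^ k (C c s) := by
    intro c s
    by_cases hs : s ∈ S
    · simp only [gi, g, C, hs, if_true]
      push_cast
      rw [mul_assoc]
      congr 1
      have := hdk s hs
      obtain ⟨e, he⟩ := Nat.exists_eq_add_of_le this
      rw [he, Nat.add_sub_cancel_left, pow_add, ← mul_assoc, ← mul_pow]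
      norm_num
    · simp [gi, g, hs]
  have hzval : ∀ c s, (s = 0 ∨ s ∈ S) → (gi s : ZMod p) *
      (((3 : ZMod p) ^ k (C c s))⁻¹ * (C c s : ZMod p)) = s := by
    intro c s hs
    by_cases hsS : s ∈ S
    · simp only [gi, C, hsS, if_true]
      rw [hclv s hsS]
      push_cast
      obtain ⟨e, he⟩ := Nat.exists_eq_add_of_le (hdk s hsS)
      have h5 := sgz_mul_abz (3 ^ d s * s)
      rw [he, Nat.add_sub_cancel_left]
      have h6 : (3 : ZMod p) ^ d s ≠ 0 := pow_ne_zero _ h3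
      have h7 : (3 : ZMod p) ^ e ≠ 0 := pow_ne_zero _ h3
      rw [pow_add]
      field_simp
      linear_combination h5
    · have hs' : s = 0 := hs.resolve_right hsS
      simp [gi, hs', h0]
  by_cases hA : A.det = 0
  · obtain ⟨x, hx0, hx⟩ := Matrix.exists_mulVec_eq_zero_iff.2 hA
    have hxc : ∀ c : R, 2 * x c = g (t c) * x (C c (t c)) + g (u c) * x (C c (u c)) := by
      intro c
      have := congrFun hx c
      simp only [Matrix.mulVec, dotProduct, A, sub_mul, Finset.sum_sub_distrib,
          Pi.single_apply, ite_mul, zero_mul, Finset.sum_ite_eq', Finset.mem_univ, if_true,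
          Pi.zero_apply] at this
      linarith
    let X : ZMod p → ℝ := fun s => g s * x (cl s)
    have hXC : ∀ c s, g s * x (C c s) = X s := by
      intro c s
      by_cases hs : s ∈ S
      · simp [X, C, hs]
      · simp [X, g, hs]
    simp only [hXC] at hxc
    have hXneg : ∀ s, X (-s) = - X s := by
      intro s
      by_cases hs : s ∈ S
      · have hs' := hneg s hs
        simp only [X, g, hs, hs', if_true, hclneg s hs, hdneg s hs, mul_neg]
        rw [sgz_neg hp2 _ (hne0 _ (hd2 s hs _ le_rfl))]
        push_cast
        ring
      · have hs' : -s ∉ S := fun h => hs ((hnegiff s).1 h)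
        simp [X, g, hs, hs']
    obtain ⟨w, -, hw⟩ := Finset.exists_max_image Finset.univ (fun c => |x c|)
      ⟨c0, Finset.mem_univ _⟩
    have hwpos : 0 < |x w| := by
      obtain ⟨v, hv⟩ := Function.ne_iff.1 hx0
      exact (abs_pos.2 hv).trans_le (hw v (Finset.mem_univ _))
    have hXle : ∀ s, |X s| ≤ |g s| * |x w| := by
      intro s
      simp only [X, abs_mul]
      exact mul_le_mul_of_nonneg_left (hw _ (Finset.mem_univ _)) (abs_nonneg _)
    have hXle1 : ∀ s, |X s| ≤ |x w| := by
      intro s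
      have := hXle s
      have := hg1 s
      nlinarith
    have hdR : ∀ c : R, d (c : ZMod p) = 0 := by
      intro c
      apply hduniq _ (hRS c)
      · simpa using hR3 c
      · intro j hj
        have : j = 0 := by omega
        simpa [this] using hRS c
    have hclR : ∀ c : R, cl c = c := by
      intro c
      apply Subtype.ext
      rw [hclv _ (hRS c), hdR c, pow_zero, one_mul, abz_of_pos _ (hRpos c)]
    have hXR : ∀ c : R, X c = x c := by
      intro c
      simp only [X, g, hRS c, if_true, hclR, hdR, pow_zero, one_mul, sgz_of_pos _ (hRpos c)]
      simp
    let I := S.filter fun v => X v = |x w|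
    have hmemI : ∀ s, X s = |x w| → s ∈ I := by
      intro s h
      simp only [I, Finset.mem_filter]
      refine ⟨?_, h⟩
      by_contra hs
      simp only [X, g, hs, if_false, zero_mul] at h
      linarith
    have hIne : I.Nonempty := by
      rcases abs_choice (x w) with h | h
      · exact ⟨w, hmemI _ (by rw [hXR, h])⟩
      · exact ⟨-w, hmemI _ (by rw [hXneg, hXR, h])⟩
    have hIcard : I.card ≤ H.card := by
      apply Finset.card_le_card_of_injOn abz
      · intro s hs
        have hs' := Finset.mem_coe.1 hs
        simp only [I, Finset.mem_filter] at hs'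
        exact habH s hs'.1
      · intro s hs s' hs' h
        have hs := (Finset.mem_filter.1 (Finset.mem_coe.1 hs)).2
        have hs' := (Finset.mem_filter.1 (Finset.mem_coe.1 hs')).2
        rcases eq_or_of_abz_eq _ _ h with h | h
        · exact h
        · rw [h, hXneg, hs'] at hs
          linarith
    have hbb := balanced_bound p I.card I le_rfl hIne ?_
    · have := Nat.pow_le_pow_right (n := 3) (by norm_num) hIcard
      omega
    · intro v hv
      have hvS := (Finset.mem_filter.1 hv).1
      have hvX := (Finset.mem_filter.1 hv).2
      have hdv : d v = 0 := by
        by_contra hdv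
        have h1 := hg3 v (fun _ => hdv)
        have h2 := hXle v
        rw [hvX, abs_abs] at h2
        nlinarith
      have hcv : (cl v : ZMod p) = abz v := by
        rw [hclv v hvS, hdv, pow_zero, one_mul]
      have hcS := hRS (cl v)
      have hsm := hsum _ hcS
      have hxx := hxc (cl v)
      have hT := abs_le.1 (hXle1 (t (cl v)))
      have hU := abs_le.1 (hXle1 (u (cl v)))
      rcases abz_eq_or v with h | h
      · have hvc : v = cl v := by rw [hcv, h]
        rw [hvc, hXR] at hvX
        refine ⟨t (cl v), hmemI _ ?_, u (cl v), hmemI _ ?_, htu _ hcS, ?_⟩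
        · linarith
        · linarith
        · rw [hsm, ← hvc]
      · have hvc : v = -cl v := by rw [hcv, h, neg_neg]
        rw [hvc, hXneg, hXR] at hvX
        refine ⟨-t (cl v), hmemI _ ?_, -u (cl v), hmemI _ ?_, fun h => htu _ hcS (neg_inj.1 h), ?_⟩
        · rw [hXneg]; linarith
        · rw [hXneg]; linarith
        · linear_combination -hsm - 2 * hvc
  · have := key_bound p B A k ?_ ?_ (fun c => ((3 : ZMod p) ^ k c)⁻¹ * (c : ZMod p)) ?_ ?_ hA
    · rw [hksum] at this
      omega
    · have hscale : ∀ (j e : R) (y : ℝ), (if j = e then y else 0) * 3 ^ k j =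
          if j = e then y * 3 ^ k e else 0 := by
        intro j e y
        by_cases h : j = e
        · rw [if_pos h, if_pos h, h]
        · rw [if_neg h, if_neg h, zero_mul]
      intro i j
      simp only [A, B, Pi.single_apply]
      push_cast
      rw [hgi i, hgi i, sub_mul, sub_mul, hscale, hscale, hscale]
    · intro c
      simp only [A]
      have ha := hkey c (t c) (u c) (ht c (hRS c)) (hu c (hRS c)) (htu c (hRS c)) (hsum c (hRS c))
      have hb := hkey c (u c) (t c) (hu c (hRS c)) (ht c (hRS c)) (htu c (hRS c)).symm
        (by rw [add_comm]; exact hsum c (hRS c))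
      have hc := hkey2 c (t c) (u c) (htu c (hRS c)) (hsum c (hRS c))
      exact row_bound c _ _ _ _ (hg1 (t c)) (hg1 (u c)) ha hb hc
    · intro h
      have := congrFun h c0
      simp only [Pi.zero_apply, mul_eq_zero, inv_eq_zero] at this
      rcases this with h | h
      · exact pow_ne_zero _ h3 h
      · exact hcne c0 h
    · intro c
      simp only [B]
      push_cast
      simp only [sub_mul, Finset.sum_sub_distrib, Pi.single_apply, Int.cast_ite, Int.cast_zero,
            ite_mul, zero_mul, Finset.sum_ite_eq', Finset.mem_univ, if_true]
      rw [hzval c _ (ht c (hRS c)), hzval c _ (hu c (hRS c))]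
      push_cast
      have h6 : (3 : ZMod p) ^ k c ≠ 0 := pow_ne_zero _ h3
      have := hsum c (hRS c)
      field_simp
      linear_combination -this


theorem four_uniq {p : ℕ} [Fact p.Prime] {K : Type*} [Field K] [CharZero K]
    (e : AddChar (ZMod p) K) (he : e.IsPrimitive)
    (σ : ZMod p → (K →+* K)) (hσ : ∀ d ≠ 0, ∀ x, σ d (e x) = e (d * x))
    (f : ZMod p → K) (hf : ∀ d ≠ 0, ∀ i, σ d (f i) = f i)
    (h : ∑ i, f i * e i = 0) (i j : ZMod p) : f i = f j := by
  have key : ∀ d ≠ 0, ∑ i, f i * e (d * i) = 0 := by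
    intro d hd
    have := congrArg (σ d) h
    rw [map_sum, map_zero] at this
    rw [← this]
    refine Finset.sum_congr rfl fun i _ => ?_
    rw [map_mul (σ d), hf d hd, hσ d hd]
  have main : ∀ j, (p : K) * f j = ∑ i, f i := by
    intro j
    have h1 : ∑ d : ZMod p, e (d * (-j)) * ∑ i, f i * e (d * i) = ∑ i, f i := by
      rw [Finset.sum_eq_single 0]
      · simp
      · intro d _ hd; rw [key d hd, mul_zero]
      · simp
    rw [← h1]
    simp_rw [Finset.mul_sum]
    rw [Finset.sum_comm]
    have h2 : ∀ i, ∑ d : ZMod p, e (d * (-j)) * (f i * e (d * i)) =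
        f i * ((if i - j = 0 then Fintype.card (ZMod p) else 0 : ℕ) : K) := by
      intro i
      rw [← AddChar.sum_mulShift (i - j) he, Finset.mul_sum]
      refine Finset.sum_congr rfl fun d _ => ?_
      rw [mul_sub, sub_eq_add_neg, AddChar.map_add_eq_mul, mul_neg]; ring
    simp_rw [h2]
    rw [Finset.sum_eq_single j]
    · simp [ZMod.card]; ring
    · intro i _ hi; simp [sub_ne_zero.2 hi]
    · simp
  have hp0 : (p : K) ≠ 0 := by exact_mod_cast (Fact.out : p.Prime).ne_zero
  exact mul_left_cancel₀ hp0 ((main i).trans (main j).symm)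

theorem trace_lower {K : Type*} [Field K] [NumberField K] (x : K) (hx : IsIntegral ℤ x)
    (h0 : x ≠ 0) : (Fintype.card (K →ₐ[ℚ] ℂ) : ℝ) ≤ ∑ τ : K →ₐ[ℚ] ℂ, ‖τ x‖ ^ 2 := by
  have h1 := prod_le_exp_sum (fun τ : K →ₐ[ℚ] ℂ => ‖τ x‖ ^ 2) (fun _ => by positivity)
  have h2 : (1 : ℝ) ≤ ∏ τ : K →ₐ[ℚ] ℂ, ‖τ x‖ ^ 2 := by
    rw [Finset.prod_pow, ← norm_prod, ← Algebra.norm_eq_prod_embeddings ℚ ℂ x]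
    obtain ⟨m, hm⟩ := IsIntegrallyClosed.isIntegral_iff.1 (Algebra.isIntegral_norm ℚ hx)
    have hm0 : m ≠ 0 := by
      rintro rfl
      rw [map_zero] at hm
      exact h0 (Algebra.norm_eq_zero_iff.1 hm.symm)
    rw [← hm]
    have : (1 : ℝ) ≤ |(m : ℝ)| := by exact_mod_cast Int.one_le_abs hm0
    simp
    nlinarith
  have h3 := h2.trans h1
  rw [← Real.exp_zero, Real.exp_le_exp] at h3
  linarith

theorem parseval {p : ℕ} [Fact p.Prime] {K : Type*} [Field K] [CharZero K]
    (e : AddChar (ZMod p) K) (he : e.IsPrimitive)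
    (σ : ZMod p → (K →+* K)) (hσ : ∀ d ≠ 0, ∀ x, σ d (e x) = e (d * x))
    (c : K →+* K) (hc : ∀ x, c (e x) = e (-x))
    (a : ZMod p → K) (ha : ∀ d ≠ 0, ∀ i, σ d (a i) = a i)
    (hca : ∀ d ≠ 0, ∀ i, σ d (c (a i)) = c (a i)) (n : ℕ)
    (hY : (∑ i, a i * e i) * c (∑ i, a i * e i) = n) :
    ∑ i, ∑ j, (a i - a j) * c (a i - a j) = 2 * ((p : K) - 1) * n := by
  have key : ∀ d ≠ 0, (∑ i, a i * e (d * i)) * (∑ j, c (a j) * e (- (d * j))) = n := by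
    intro d hd
    have := congrArg (σ d) hY
    simp only [map_mul, map_sum, map_natCast, hc, hσ d hd, ha d hd, hca d hd] at this
    simpa only [mul_neg] using this
  have h1 : ∑ d : ZMod p, (∑ i, a i * e (d * i)) * (∑ j, c (a j) * e (- (d * j))) =
      (∑ i, a i) * (∑ i, c (a i)) + ((p : K) - 1) * n := by
    rw [← Finset.add_sum_erase _ _ (Finset.mem_univ (0 : ZMod p))]
    congr 1
    · simp
    · rw [Finset.sum_congr rfl (fun d hd => key d (Finset.ne_of_mem_erase hd))]
      rw [Finset.sum_const, Finset.card_erase_of_mem (Finset.mem_univ _), Finset.card_univ, ZMod.card,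
        nsmul_eq_mul, Nat.cast_sub (Fact.out : p.Prime).one_le]
      simp
  have h2 : ∑ d : ZMod p, (∑ i, a i * e (d * i)) * (∑ j, c (a j) * e (- (d * j))) =
      p * ∑ i, a i * c (a i) := by
    simp_rw [Finset.sum_mul_sum]
    rw [Finset.sum_comm, Finset.mul_sum]
    refine Finset.sum_congr rfl fun i _ => ?_
    rw [Finset.sum_comm]
    have h3 : ∀ j, ∑ d : ZMod p, a i * e (d * i) * (c (a j) * e (-(d * j))) =
        a i * c (a j) * ((if i - j = 0 then Fintype.card (ZMod p) else 0 : ℕ) : K) := by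
      intro j
      rw [← AddChar.sum_mulShift (i - j) he, Finset.mul_sum]
      refine Finset.sum_congr rfl fun d _ => ?_
      rw [mul_sub, sub_eq_add_neg, AddChar.map_add_eq_mul]; ring
    simp_rw [h3]
    rw [Finset.sum_eq_single i]
    · simp [ZMod.card]; ring
    · intro j _ hj; simp [sub_ne_zero.2 (Ne.symm hj)]
    · simp
  have h4 : ∑ i, ∑ j, (a i - a j) * c (a i - a j) =
      2 * (p * ∑ i, a i * c (a i)) - 2 * ((∑ i, a i) * (∑ i, c (a i))) := by
    have : ∀ i j, (a i - a j) * c (a i - a j) =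
      a i * c (a i) + a j * c (a j) - a i * c (a j) - a j * c (a i) := by
        intro i j; rw [map_sub]; ring
    simp_rw [this, Finset.sum_sub_distrib, Finset.sum_add_distrib, ← Finset.mul_sum, ← Finset.sum_mul]
    simp only [Finset.sum_const, Finset.card_univ, ZMod.card, nsmul_eq_mul]
    have h5 : ∑ i, a i * ((p : K) * c (a i)) = p * ∑ i, a i * c (a i) := by
      rw [Finset.mul_sum]; exact Finset.sum_congr rfl fun i _ => by ring
    rw [h5, ← Finset.mul_sum]
    ring
  rw [h4, ← h2, h1]; ring

theorem small_support {p : ℕ} [Fact p.Prime] {K : Type*} [Field K] [NumberField K] [DecidableEq K]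
    (e : AddChar (ZMod p) K) (he : e.IsPrimitive)
    (σ : ZMod p → (K →+* K)) (hσ : ∀ d ≠ 0, ∀ x, σ d (e x) = e (d * x))
    (c : K →+* K) (hc : ∀ x, c (e x) = e (-x))
    (hcτ : ∀ (τ : K →ₐ[ℚ] ℂ) x, τ (c x) = (starRingEnd ℂ) (τ x))
    (B : Subring K) (hBi : ∀ x ∈ B, IsIntegral ℤ x)
    (hBσ : ∀ x ∈ B, ∀ d ≠ 0, σ d x = x) (hBc : ∀ x ∈ B, c x ∈ B)
    (a : ZMod p → K) (ha : ∀ i, a i ∈ B) (n : ℕ) (hn : 1 ≤ n) (hpn : n ^ 2 + n + 2 ≤ p)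
    (hY : (∑ i, a i * e i) * c (∑ i, a i * e i) = n) :
    ∃ a' : ZMod p → K, (∀ i, a' i ∈ B) ∧ ∑ i, a' i * e i = ∑ i, a i * e i ∧
      (Finset.univ.filter fun i => a' i ≠ 0).card ≤ n := by
  have hpars := parseval e he σ hσ c hc a (fun d hd i => hBσ _ (ha i) d hd)
    (fun d hd i => hBσ _ (hBc _ (ha i)) d hd) n hY
  have hcard : 0 < (Fintype.card (K →ₐ[ℚ] ℂ) : ℝ) := by
    exact_mod_cast Fintype.card_pos_iff.2 ⟨(IsAlgClosed.lift : K →ₐ[ℚ] ℂ)⟩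
  have hτ : ∀ τ : K →ₐ[ℚ] ℂ, ∑ i, ∑ j, ‖τ (a i - a j)‖ ^ 2 = 2 * ((p : ℝ) - 1) * n := by
    intro τ
    have h1 := congrArg τ hpars
    simp only [map_sum, map_mul, hcτ, map_ofNat, map_natCast, map_sub τ (p : K), map_one] at h1
    simp only [Complex.mul_conj, Complex.normSq_eq_norm_sq] at h1
    exact_mod_cast h1
  have hD : ∑ i, ((Finset.univ.filter fun j => a i ≠ a j).card : ℝ) ≤ 2 * ((p : ℝ) - 1) * n := by
    have h2 : ∑ i, ((Finset.univ.filter fun j => a i ≠ a j).card : ℝ) *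
        (Fintype.card (K →ₐ[ℚ] ℂ) : ℝ) ≤ ∑ i, ∑ j, ∑ τ : K →ₐ[ℚ] ℂ, ‖τ (a i - a j)‖ ^ 2 := by
      refine Finset.sum_le_sum fun i _ => ?_
      rw [← nsmul_eq_mul, ← Finset.sum_const, Finset.sum_filter]
      refine Finset.sum_le_sum fun j _ => ?_
      split_ifs with h
      · exact trace_lower _ (hBi _ (B.sub_mem (ha i) (ha j))) (sub_ne_zero.2 h)
      · positivity
    have h3 : ∑ i, ∑ j, ∑ τ : K →ₐ[ℚ] ℂ, ‖τ (a i - a j)‖ ^ 2 =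
        (2 * ((p : ℝ) - 1) * n) * (Fintype.card (K →ₐ[ℚ] ℂ) : ℝ) := by
      simp_rw [Finset.sum_comm (s := Finset.univ (α := ZMod p)) (t := Finset.univ (α := K →ₐ[ℚ] ℂ))]
      rw [Finset.sum_congr rfl (fun τ _ => hτ τ)]
      simp; ring
    rw [h3, ← Finset.sum_mul] at h2
    exact le_of_mul_le_mul_right h2 hcard
  have hp1 := (Fact.out : p.Prime).one_lt
  have hD' : ∑ i, (Finset.univ.filter fun j => a i ≠ a j).card ≤ 2 * (p - 1) * n := by
    have : ((∑ i, (Finset.univ.filter fun j => a i ≠ a j).card : ℕ) : ℝ) ≤ ((2 * (p - 1) * n : ℕ) : ℝ) := by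
      push_cast [Nat.cast_sub hp1.le]; exact hD
    exact_mod_cast this
  obtain ⟨i0, -, hi0⟩ : ∃ i0 ∈ (Finset.univ : Finset (ZMod p)),
      (Finset.univ.filter fun j => a i0 ≠ a j).card < 2 * n := by
    apply Finset.exists_lt_of_sum_lt
    refine hD'.trans_lt ?_
    simp only [Finset.sum_const, Finset.card_univ, ZMod.card, smul_eq_mul]
    have : 2 * (p - 1) * n = (p - 1) * (2 * n) := by ring
    rw [this]
    exact Nat.mul_lt_mul_of_pos_right (by omega) (by omega)
  set S := Finset.univ.filter fun j => a i0 ≠ a j with hS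
  have hcompl : Sᶜ.card = p - S.card := by rw [Finset.card_compl, ZMod.card]
  have hSp : S.card ≤ p := by simpa [ZMod.card] using S.card_le_univ
  refine ⟨fun i => a i - a i0, fun i => B.sub_mem (ha i) (ha i0), ?_, ?_⟩
  · simp_rw [sub_mul, Finset.sum_sub_distrib, ← Finset.mul_sum]
    have : ∑ i, e i = 0 := by
      apply AddChar.sum_eq_zero_of_ne_one
      have := he one_ne_zero
      rwa [AddChar.mulShift_one] at this
    rw [this]; simp
  · have hSS : (Finset.univ.filter fun i => a i - a i0 ≠ 0) = S := by
      ext i; simp [hS, sub_ne_zero, eq_comm]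
    rw [hSS]
    have hpair : 2 * (S.card * (p - S.card)) ≤ 2 * (p - 1) * n := by
      refine le_trans ?_ hD'
      rw [← Finset.sum_add_sum_compl S]
      have h1 : S.card * (p - S.card) ≤ ∑ i ∈ S, (Finset.univ.filter fun j => a i ≠ a j).card := by
        rw [← smul_eq_mul, ← Finset.sum_const]
        refine Finset.sum_le_sum fun i hi => ?_
        rw [← hcompl]
        refine Finset.card_le_card fun j hj => ?_
        simp [hS] at hi hj ⊢
        rw [← hj]; exact Ne.symm hi
      have h2 : S.card * (p - S.card) ≤ ∑ i ∈ Sᶜ, (Finset.univ.filter fun j => a i ≠ a j).card := by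
        rw [mul_comm, ← hcompl, ← smul_eq_mul, ← Finset.sum_const]
        refine Finset.sum_le_sum fun i hi => ?_
        refine Finset.card_le_card fun j hj => ?_
        simp [hS] at hi hj ⊢
        rw [← hi]; exact hj
      omega
    by_contra hlt
    push Not at hlt
    obtain ⟨u, hu⟩ := Nat.exists_eq_add_of_lt hlt
    obtain ⟨w, hw⟩ := Nat.exists_eq_add_of_le hpn
    have h5 : (S.card : ℤ) * (p - S.card) ≤ (p - 1) * n := by
      have : S.card * (p - S.card) ≤ (p - 1) * n := by
        have : 2 * (p - 1) * n = 2 * ((p - 1) * n) := by ring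
        omega
      zify [hSp, hp1.le] at this
      exact this
    have hun : (u : ℤ) + 1 < n := by omega
    rw [hu, hw] at h5
    push_cast at h5
    nlinarith [mul_nonneg (Int.natCast_nonneg u) (Int.natCast_nonneg w), mul_nonneg (Int.natCast_nonneg u) (sub_nonneg.2 hun.le), Int.natCast_nonneg u, Int.natCast_nonneg w, mul_nonneg (mul_nonneg (Int.natCast_nonneg u) (sub_nonneg.2 hun.le)) (Int.natCast_nonneg n)]


theorem autocorr {p : ℕ} [Fact p.Prime] {K : Type*} [Field K] [CharZero K] [DecidableEq K]
    (e : AddChar (ZMod p) K) (he : e.IsPrimitive)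
    (σ : ZMod p → (K →+* K)) (hσ : ∀ d ≠ 0, ∀ x, σ d (e x) = e (d * x))
    (c : K →+* K) (hc : ∀ x, c (e x) = e (-x))
    (a : ZMod p → K) (ha : ∀ d ≠ 0, ∀ i, σ d (a i) = a i)
    (hca : ∀ d ≠ 0, ∀ i, σ d (c (a i)) = c (a i)) (n : ℕ) (hpn : n ^ 2 + n + 2 ≤ p)
    (hcard : (Finset.univ.filter fun i => a i ≠ 0).card ≤ n)
    (hY : (∑ i, a i * e i) * c (∑ i, a i * e i) = n)
    (x : ZMod p) (hx : x ≠ 0) : ∑ i, a (i + x) * c (a i) = 0 := by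
  classical
  set C : ZMod p → K := fun x => ∑ i, a (i + x) * c (a i) with hC
  have h1 : ∑ x, C x * e x = n := by
    rw [← hY]
    simp only [map_sum, map_mul, hc, hC, Finset.sum_mul, Finset.mul_sum]
    rw [Finset.sum_comm]
    refine Finset.sum_congr rfl fun i _ => ?_
    rw [← Equiv.sum_comp (Equiv.addLeft i) (fun k => a k * e k * (c (a i) * e (-i)))]
    refine Finset.sum_congr rfl fun x _ => ?_
    simp only [Equiv.coe_addLeft]
    have : e x = e (i + x) * e (-i) := by rw [← AddChar.map_add_eq_mul]; congr 1; ring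
    rw [this]; ring
  have h2 : ∀ i j, C i - (if i = 0 then (n : K) else 0) = C j - (if j = 0 then (n : K) else 0) := by
    apply four_uniq e he σ hσ (fun i => C i - (if i = 0 then (n : K) else 0))
    · intro d hd i
      simp only [hC, map_sub, map_sum, map_mul, ha d hd, hca d hd]
      split_ifs <;> simp
    · simp only [sub_mul, Finset.sum_sub_distrib, h1]
      simp
  set S := Finset.univ.filter fun i => a i ≠ 0 with hS
  obtain ⟨y, hy⟩ : ∃ y, y ∉ insert 0 ((S ×ˢ S).image fun z => z.1 - z.2) := by
    by_contra hcon
    push Not at hcon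
    have h3 : insert 0 ((S ×ˢ S).image fun z => z.1 - z.2) = Finset.univ := by
      ext y; simpa using hcon y
    have h4 := congrArg Finset.card h3
    rw [Finset.card_univ, ZMod.card] at h4
    have h5 := Finset.card_insert_le 0 ((S ×ˢ S).image fun z => z.1 - z.2)
    have h6 : ((S ×ˢ S).image fun z => z.1 - z.2).card ≤ S.card * S.card := by
      rw [← Finset.card_product]; exact Finset.card_image_le
    nlinarith
  simp only [Finset.mem_insert, Finset.mem_image, Finset.mem_product, not_or, not_exists] at hy
  have hCy : C y = 0 := by
    refine Finset.sum_eq_zero fun i _ => ?_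
    by_contra hne
    have h7 := left_ne_zero_of_mul hne
    have h8 : a i ≠ 0 := by
      intro h; rw [h] at hne; simp at hne
    exact hy.2 (i + y, i) ⟨⟨by simp [hS, h7], by simp [hS, h8]⟩, by simp⟩
  have := h2 x y
  simpa [hx, hy.1, hCy] using this

theorem core_descent {p : ℕ} [Fact p.Prime] {K : Type*} [Field K] [NumberField K]
    (e : AddChar (ZMod p) K) (he : e.IsPrimitive)
    (σ : ZMod p → (K →+* K)) (hσ : ∀ d ≠ 0, ∀ x, σ d (e x) = e (d * x))
    (c : K →+* K) (hc : ∀ x, c (e x) = e (-x))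
    (hcτ : ∀ (τ : K →ₐ[ℚ] ℂ) x, τ (c x) = (starRingEnd ℂ) (τ x))
    (B : Subring K) (hBi : ∀ x ∈ B, IsIntegral ℤ x)
    (hBσ : ∀ x ∈ B, ∀ d ≠ 0, σ d x = x) (hBc : ∀ x ∈ B, c x ∈ B)
    (ψ : K →+* K) (hψ : ∀ x, ψ (e x) = e (-x)) (hBψ : ∀ x ∈ B, ψ x ∈ B)
    (Y : K) (a : ZMod p → K) (ha : ∀ i, a i ∈ B) (hYa : Y = ∑ i, a i * e i)
    (n : ℕ) (hn : 1 ≤ n) (hpn : n ^ 2 + n + 2 ≤ p)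
    (h3 : ∀ k, 2 * k ≤ n → 3 ^ k < p)
    (hY : Y * c Y = n)
    (w : K) (hw : w ∈ B) (s : ZMod p) (hψY : ψ Y = w * e s * Y) :
    ∃ b ∈ B, ∃ i, Y = b * e i := by
  classical
  subst hYa
  obtain ⟨a', ha', hsum, hcard⟩ := small_support e he σ hσ c hc hcτ B hBi hBσ hBc a ha n hn hpn hY
  rw [← hsum] at hY hψY ⊢
  clear hsum ha a
  rename' a' => a, ha' => ha
  have hauto := autocorr e he σ hσ c hc a (fun d hd i => hBσ _ (ha i) d hd)
    (fun d hd i => hBσ _ (hBc _ (ha i)) d hd) n hpn hcard hY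
  have hp4 : 4 ≤ p := by nlinarith
  have hp2 : p ≠ 2 := by omega
  have hp3 : p ≠ 3 := by omega
  have two_ne : (2 : ZMod p) ≠ 0 := by
    intro h
    have : ((2 : ℕ) : ZMod p) = 0 := by exact_mod_cast h
    rw [ZMod.natCast_eq_zero_iff] at this
    exact absurd (Nat.le_of_dvd (by norm_num) this) (by omega)
  set S := Finset.univ.filter fun i => a i ≠ 0 with hS
  have memS : ∀ i, i ∈ S ↔ a i ≠ 0 := by intro i; simp [hS]
  -- symmetry
  have hsymm : ∀ i, ψ (a (-i)) = w * a (i - s) := by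
    have hconst : ∀ i j, ψ (a (-i)) - w * a (i - s) = ψ (a (-j)) - w * a (j - s) := by
      apply four_uniq e he σ hσ (fun i => ψ (a (-i)) - w * a (i - s))
      · intro d hd i
        exact hBσ _ (B.sub_mem (hBψ _ (ha _)) (B.mul_mem hw (ha _))) d hd
      · simp only [sub_mul, Finset.sum_sub_distrib]
        rw [sub_eq_zero]
        have e1 : ∑ i, ψ (a (-i)) * e i = ψ (∑ i, a i * e i) := by
          rw [map_sum, ← Equiv.sum_comp (Equiv.neg (ZMod p)) (fun k => ψ (a k * e k))]
          refine Finset.sum_congr rfl fun i _ => ?_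
          simp [hψ]
        have e2 : ∑ i, w * a (i - s) * e i = w * e s * (∑ i, a i * e i) := by
          rw [Finset.mul_sum, ← Equiv.sum_comp (Equiv.subRight s) (fun k => w * e s * (a k * e k))]
          refine Finset.sum_congr rfl fun i _ => ?_
          simp only [Equiv.subRight_apply]
          have : e i = e s * e (i - s) := by rw [← AddChar.map_add_eq_mul]; congr 1; ring
          rw [this]; ring
        rw [e1, e2, hψY]
    obtain ⟨y, hy⟩ : ∃ y, y ∉ S.image (fun i => -i) ∪ S.image (fun i => i + s) := by
      by_contra hcon
      push Not at hcon
      have h3 : S.image (fun i => -i) ∪ S.image (fun i => i + s) = Finset.univ := by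
        ext y; simpa using hcon y
      have h4 := congrArg Finset.card h3
      rw [Finset.card_univ, ZMod.card] at h4
      have h5 := Finset.card_union_le (S.image (fun i => -i)) (S.image (fun i => i + s))
      have h6 : (S.image (fun i => -i)).card ≤ S.card := Finset.card_image_le
      have h7 : (S.image (fun i => i + s)).card ≤ S.card := Finset.card_image_le
      nlinarith
    simp only [Finset.mem_union, Finset.mem_image, not_or, not_exists, not_and] at hy
    have y1 : a (-y) = 0 := by
      by_contra h; exact hy.1 (-y) ((memS _).2 h) (by simp)
    have y2 : a (y - s) = 0 := by
      by_contra h; exact hy.2 (y - s) ((memS _).2 h) (by simp)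
    intro i
    have := hconst i y
    rw [y1, y2] at this
    simpa [sub_eq_zero] using this
  set h : ZMod p := -s / 2 with hh
  have hs : s = -2 * h := by rw [hh]; field_simp
  have symS : ∀ k, h + k ∈ S → h - k ∈ S := by
    intro k hk
    rw [memS] at hk ⊢
    intro h0
    apply hk
    have := hsymm (-(h + k))
    rw [neg_neg, hs, show -(h + k) - -2 * h = h - k by ring, h0, mul_zero] at this
    exact (map_eq_zero ψ).1 this
  have hrep : ∀ i ∈ S, ∀ j ∈ S, i ≠ j → ∃ i' ∈ S, ∃ j' ∈ S, i' - j' = i - j ∧ j' ≠ j := by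
    intro i hi j hj hij
    by_contra hcon
    push Not at hcon
    have h1 := hauto (i - j) (sub_ne_zero.2 hij)
    rw [Finset.sum_eq_single j] at h1
    · rw [add_sub_cancel] at h1
      rw [memS] at hi hj
      exact mul_ne_zero hi (by simpa using hj) h1
    · intro k _ hk
      by_contra hne
      have h7 := left_ne_zero_of_mul hne
      have h8 : a k ≠ 0 := by
        intro h; rw [h] at hne; simp at hne
      exact hk (hcon _ ((memS _).2 h7) _ ((memS _).2 h8) (by ring))
    · simp
  set T : Finset (ZMod p) := Finset.univ.filter fun k => k ≠ 0 ∧ h + k ∈ S with hT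
  have memT : ∀ k, k ∈ T ↔ k ≠ 0 ∧ h + k ∈ S := by intro k; simp [hT]
  have hT0 : (0 : ZMod p) ∉ T := by simp [hT]
  have hTneg : ∀ k ∈ T, -k ∈ T := by
    intro k hk
    rw [memT] at hk ⊢
    exact ⟨neg_ne_zero.2 hk.1, by simpa [sub_eq_add_neg] using symS k hk.2⟩
  have hTcard : T.card ≤ n := by
    refine le_trans ?_ hcard
    apply Finset.card_le_card_of_injOn (fun k => h + k)
    · intro k hk; exact ((memT k).1 hk).2
    · intro k _ l _ hkl; simpa using hkl
  have hTe : T = ∅ := by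
    apply symm_small hp2 hp3 T hT0 hTneg
    · apply h3
      rw [← card_half hp2 T hT0 hTneg]; exact hTcard
    · intro k hk
      rw [memT] at hk
      have hne : h + k ≠ h - k := by
        intro hcon
        have : 2 * k = 0 := by linear_combination hcon
        rcases mul_eq_zero.1 this with h | h
        · exact two_ne h
        · exact hk.1 h
      obtain ⟨i, hi, j, hj, hij, hjk⟩ := hrep _ hk.2 _ (symS k hk.2) hne
      have hj' : h + (h - j) ∈ S := by
        have := symS (j - h) (by simpa using hj)
        convert this using 1; ring
      refine ⟨i - h, h - j, ?_, ?_, ?_, ?_⟩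
      · rw [memT]; by_cases h0 : i - h = 0
        · exact Or.inl h0
        · exact Or.inr ⟨h0, by simpa using hi⟩
      · rw [memT]; by_cases h0 : h - j = 0
        · exact Or.inl h0
        · exact Or.inr ⟨h0, hj'⟩
      · intro heq
        apply hjk
        have : 2 * (j - (h - k)) = 0 := by linear_combination heq - hij
        rcases mul_eq_zero.1 this with h | h
        · exact absurd h two_ne
        · exact sub_eq_zero.1 h
      · linear_combination hij
  refine ⟨a h, ha h, h, ?_⟩
  rw [Finset.sum_eq_single h]
  · intro i _ hi
    by_contra hne
    have h7 := left_ne_zero_of_mul hne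
    have : i - h ∈ T := by
      rw [memT]; exact ⟨sub_ne_zero.2 hi, by simpa [memS] using h7⟩
    rw [hTe] at this; simp at this
  · simp


theorem frob_assoc {R : Type*} [CommRing R] [IsDedekindDomain R] (ψ : R ≃+* R) (q : R)
    (Q : ℕ) (hψ : ∀ x, q ∣ ψ x - x ^ Q) (hQ : Q ≠ 0) (b : ℕ) (y : R) (hy : y ∣ q ^ b) :
    Associated (ψ y) y := by
  have hmem : ∀ P : Ideal R, P.IsPrime → q ∈ P → P.map (ψ : R →+* R) = P := by
    intro P hP hqP
    have hiff : ∀ x, ψ x ∈ P ↔ x ∈ P := by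
      intro x
      have h1 : ψ x - x ^ Q ∈ P := P.mem_of_dvd (hψ x) hqP
      constructor
      · intro h
        have : x ^ Q ∈ P := by simpa using P.sub_mem h h1
        exact hP.mem_of_pow_mem _ this
      · intro h
        have h2 : x ^ Q ∈ P := P.pow_mem_of_mem h _ (Nat.pos_of_ne_zero hQ)
        simpa using P.add_mem h1 h2
    apply le_antisymm
    · rw [Ideal.map_le_iff_le_comap]
      intro x hx; exact (hiff x).2 hx
    · intro x hx
      have : x = (ψ : R →+* R) (ψ.symm x) := by simp
      rw [this]
      apply Ideal.mem_map_of_mem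
      rw [← hiff]; simpa using hx
  have hall : ∀ I : Ideal R, I ∣ Ideal.span {q} ^ b → I.map (ψ : R →+* R) = I := by
    intro I
    induction I using UniqueFactorizationMonoid.induction_on_prime with
    | h₁ => intro _; simp [Ideal.map_bot]
    | h₂ x hx =>
      intro _
      rw [Ideal.isUnit_iff] at hx
      rw [hx, Ideal.map_top]
    | h₃ a P ha hP ih =>
      intro hd
      rw [Ideal.map_mul, ih (dvd_of_mul_left_dvd hd), hmem P (Ideal.isPrime_of_prime hP)]
      have h1 : P ∣ Ideal.span {q} := hP.dvd_of_dvd_pow (dvd_of_mul_right_dvd hd)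
      rw [Ideal.dvd_span_singleton] at h1
      exact h1
  have h2 := hall (Ideal.span {y}) (by
    rw [Ideal.span_singleton_pow, Ideal.dvd_span_singleton, Ideal.mem_span_singleton]; exact hy)
  rw [Ideal.map_span, Set.image_singleton, Ideal.span_singleton_eq_span_singleton] at h2
  exact h2

theorem frob_congr {R : Type*} [CommRing R] (q : ℕ) [Fact q.Prime] (z : R)
    (hz : Algebra.adjoin ℤ {z} = ⊤) (ψ : R →+* R) (j : ℕ) (hψ : ψ z = z ^ (q ^ j)) (x : R) :
    (q : R) ∣ ψ x - x ^ (q ^ j) := by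
  by_cases hu : IsUnit (q : R)
  · exact hu.dvd
  · have : CharP (R ⧸ Ideal.span {(q : R)}) q := CharP.quotient R q hu
    set π := Ideal.Quotient.mk (Ideal.span {(q : R)})
    let f : R →ₐ[ℤ] (R ⧸ Ideal.span {(q : R)}) := (π.comp ψ).toIntAlgHom
    let g : R →ₐ[ℤ] (R ⧸ Ideal.span {(q : R)}) := ((iterateFrobenius _ q j).comp π).toIntAlgHom
    have hf : ∀ y, f y = π (ψ y) := fun _ => rfl
    have hg : ∀ y, g y = (π y) ^ (q ^ j) := fun y => iterateFrobenius_def q j (π y)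
    have hfg : f = g := by
      apply AlgHom.ext_of_adjoin_eq_top hz
      intro y hy
      rw [Set.mem_singleton_iff] at hy
      subst hy
      rw [hf, hg, hψ, map_pow]
    have h1 : f x = g x := by rw [hfg]
    rw [hf, hg] at h1
    rw [← Ideal.mem_span_singleton, ← Ideal.Quotient.eq, h1, map_pow]

theorem exists_gal (N : ℕ) [NeZero N] (K : Type*) [Field K] [NumberField K]
    [IsCyclotomicExtension {N} ℚ K] (k : ℕ) (hk : k.Coprime N) :
    ∃ σ : K ≃ₐ[ℚ] K, ∀ x : K, x ^ N = 1 → σ x = x ^ k := by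
  refine ⟨(IsCyclotomicExtension.Rat.galEquivZMod N K).symm (ZMod.unitOfCoprime k hk), fun x hx => ?_⟩
  rw [IsCyclotomicExtension.Rat.galEquivZMod_apply_of_pow_eq N K _ hx, MulEquiv.apply_symm_apply,
    ZMod.coe_unitOfCoprime, ZMod.val_natCast]
  conv_rhs => rw [← Nat.mod_add_div k N, pow_add, pow_mul, hx, one_pow, mul_one]

theorem finite_order_cyc (N : ℕ) [NeZero N] (K : Type*) [Field K] [NumberField K]
    [IsCyclotomicExtension {N} ℚ K] (ζ : K) (hζ : IsPrimitiveRoot ζ N) (u : K) (m : ℕ) (hm : 0 < m)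
    (hu : u ^ m = 1) : ∃ k : ℕ, u = ζ ^ k ∨ u = - ζ ^ k := by
  have hfin : IsOfFinOrder u := isOfFinOrder_iff_pow_eq_one.2 ⟨m, hm, hu⟩
  rcases Nat.even_or_odd N with hN | hN
  · have h1 := IsCyclotomicExtension.Rat.torsionOrder_eq (n := N) (K := K)
    rw [if_pos hN] at h1
    have : NeZero (orderOf u) := ⟨hfin.orderOf_pos.ne'⟩
    have h2 := NumberField.Units.dvd_torsionOrder_of_isPrimitiveRoot (IsPrimitiveRoot.orderOf u)
    rw [h1] at h2
    obtain ⟨k, -, hk⟩ := hζ.eq_pow_of_pow_eq_one (orderOf_dvd_iff_pow_eq_one.1 h2)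
    exact ⟨k, Or.inl hk.symm⟩
  · obtain ⟨k, -, hk⟩ := hζ.exists_pow_or_neg_mul_pow_of_isOfFinOrder hN hfin
    exact ⟨k, hk⟩

theorem conj_spec (N : ℕ) [NeZero N] (K : Type*) [Field K] [NumberField K]
    [IsCyclotomicExtension {N} ℚ K] (ζ : K) (hζ : IsPrimitiveRoot ζ N) (c : K ≃ₐ[ℚ] K)
    (hc : c ζ = ζ⁻¹) (τ : K →ₐ[ℚ] ℂ) (x : K) : τ (c x) = (starRingEnd ℂ) (τ x) := by
  have h : τ.comp (c : K →ₐ[ℚ] K) =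
      ((Complex.conjAe.restrictScalars ℚ : ℂ ≃ₐ[ℚ] ℂ) : ℂ →ₐ[ℚ] ℂ).comp τ := by
    apply (hζ.powerBasis ℚ).algHom_ext
    have h1 : ‖τ ζ‖ = 1 := by
      apply norm_eq_one_of_pow_eq_one (n := N) _ (NeZero.ne N)
      rw [← map_pow, hζ.pow_eq_one, map_one]
    simp [hc, Complex.inv_eq_conj h1]
  exact DFunLike.congr_fun h x


theorem psi_unit (N : ℕ) [NeZero N] (K : Type*) [Field K] [NumberField K]
    [IsCyclotomicExtension {N} ℚ K] (ζ : K) (hζ : IsPrimitiveRoot ζ N)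
    (q : ℕ) [Fact q.Prime] (j b : ℕ) (ψ : K ≃ₐ[ℚ] K) (hψ : ψ ζ = ζ ^ (q ^ j))
    (c : K ≃ₐ[ℚ] K) (hc : c ζ = ζ⁻¹) (Y : K) (hYi : IsIntegral ℤ Y)
    (hY : Y * c Y = ((q ^ b : ℕ) : K)) :
    ∃ k : ℕ, ψ Y = ζ ^ k * Y ∨ ψ Y = - ζ ^ k * Y := by
  have hq0 : q ≠ 0 := (Fact.out : q.Prime).ne_zero
  let ψR : NumberField.RingOfIntegers K ≃+* NumberField.RingOfIntegers K :=
    NumberField.RingOfIntegers.mapRingEquiv ψ.toRingEquiv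
  have hψR : ∀ x : NumberField.RingOfIntegers K, ((ψR x : NumberField.RingOfIntegers K) : K) = ψ (x : K) :=
    fun x => rfl
  let y : NumberField.RingOfIntegers K := ⟨Y, hYi⟩
  let y' : NumberField.RingOfIntegers K := ⟨c Y, hYi.map (c.toAlgHom.restrictScalars ℤ)⟩
  have hyy : y * y' = ((q : NumberField.RingOfIntegers K)) ^ b := by
    apply NumberField.RingOfIntegers.ext
    have : ((y * y' : NumberField.RingOfIntegers K) : K) = Y * c Y := rfl
    rw [this, hY]; simp
  have hcong : ∀ x, (q : NumberField.RingOfIntegers K) ∣ ψR x - x ^ (q ^ j) := by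
    intro x
    have := frob_congr q hζ.toInteger (IsCyclotomicExtension.Rat.adjoin_singleton_eq_top hζ)
      (ψR : NumberField.RingOfIntegers K →+* NumberField.RingOfIntegers K) j (by
        apply NumberField.RingOfIntegers.ext
        have e1 : ((hζ.toInteger ^ (q ^ j) : NumberField.RingOfIntegers K) : K) = ζ ^ (q ^ j) :=
          map_pow (algebraMap (NumberField.RingOfIntegers K) K) hζ.toInteger (q ^ j)
        rw [e1]; exact hψ) x
    simpa using this
  have hassoc := frob_assoc ψR (q : NumberField.RingOfIntegers K) (q ^ j) hcong
    (pow_ne_zero _ hq0) b y ⟨y', hyy.symm⟩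
  obtain ⟨v, hv⟩ := hassoc.symm
  have hvK : Y * ((v : NumberField.RingOfIntegers K) : K) = ψ Y := by
    exact congrArg (fun z : NumberField.RingOfIntegers K => (z : K)) hv
  have hnorm : ∀ φ : K →ₐ[ℚ] ℂ, ‖φ Y‖ ^ 2 = ((q ^ b : ℕ) : ℝ) := by
    intro φ
    have h1 := congrArg φ hY
    rw [map_mul, conj_spec N K ζ hζ c hc φ Y, Complex.mul_conj, Complex.normSq_eq_norm_sq,
      map_natCast] at h1
    exact_mod_cast h1
  have hqb : (0 : ℝ) < ((q ^ b : ℕ) : ℝ) := by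
    exact_mod_cast pow_pos (Nat.pos_of_ne_zero hq0) b
  obtain ⟨m, hm, hu⟩ := NumberField.Embeddings.pow_eq_one_of_norm_eq_one K ℂ
    (x := ((v : NumberField.RingOfIntegers K) : K)) (NumberField.RingOfIntegers.isIntegral_coe _) (by
      intro φ
      have h1 := hnorm φ.toRatAlgHom
      have h2 := hnorm (φ.toRatAlgHom.comp (ψ : K →ₐ[ℚ] K))
      have h3 : (φ.toRatAlgHom.comp (ψ : K →ₐ[ℚ] K)) Y = φ Y * φ ((v : NumberField.RingOfIntegers K) : K) := by
        rw [← map_mul, hvK]; rfl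
      have h4 : φ.toRatAlgHom Y = φ Y := rfl
      rw [h3, norm_mul, mul_pow] at h2
      rw [h4] at h1
      rw [h1] at h2
      have h5 : ‖φ ((v : NumberField.RingOfIntegers K) : K)‖ ^ 2 = 1 := by
        apply mul_left_cancel₀ hqb.ne'
        rw [h2, mul_one]
      exact (pow_eq_one_iff_of_nonneg (norm_nonneg _) two_ne_zero).1 h5)
  obtain ⟨k, hk⟩ := finite_order_cyc N K ζ hζ _ m hm hu
  refine ⟨k, ?_⟩
  rcases hk with hk | hk
  · left; rw [← hvK, hk, mul_comm]
  · right; rw [← hvK, hk, mul_comm]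

theorem exists_half {p q : ℕ} (hp : p.Prime) (hq : q.Prime) (hpq : p ≠ q)
    (hord : Even (orderOf (q : ZMod p))) : ∃ j, ((q ^ j : ℕ) : ZMod p) = -1 := by
  have := Fact.mk hp
  have hq0 : (q : ZMod p) ≠ 0 := by
    rw [Ne, ZMod.natCast_eq_zero_iff]
    intro h
    exact hpq ((Nat.prime_dvd_prime_iff_eq hp hq).1 h)
  obtain ⟨j, hj⟩ := hord
  have hpos : 0 < orderOf (q : ZMod p) := by
    rw [orderOf_pos_iff, isOfFinOrder_iff_pow_eq_one]
    exact ⟨p - 1, by have := hp.two_le; omega, ZMod.pow_card_sub_one_eq_one hq0⟩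
  refine ⟨j, ?_⟩
  have h1 : ((q : ZMod p) ^ j) ^ 2 = 1 := by
    rw [← pow_mul, mul_two, ← hj, pow_orderOf_eq_one]
  rcases sq_eq_one_iff.1 h1 with h | h
  · exfalso
    have := orderOf_dvd_of_pow_eq_one h
    have := Nat.le_of_dvd (by omega) this
    omega
  · push_cast; exact h


theorem crt_nat (p r a b : ℕ) (h : p.Coprime r) : ∃ k, k ≡ a [MOD p] ∧ k ≡ b [MOD r] :=
  ⟨_, (Nat.chineseRemainder h a b).2⟩

theorem pow_modEq {M : Type*} [Monoid M] {x : M} {n a b : ℕ} (hx : x ^ n = 1) (h : a ≡ b [MOD n]) :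
    x ^ a = x ^ b := by
  rw [← Nat.mod_add_div a n, ← Nat.mod_add_div b n, pow_add, pow_add, pow_mul, pow_mul, hx, one_pow,
    one_pow, h]

theorem descent_K (p q r b n : ℕ) [Fact p.Prime] [Fact q.Prime] [NeZero (p * r)] (hpq : p ≠ q)
    (hr : 1 ≤ r) (hpr : p.Coprime r) (hqr : q.Coprime r) (hn : n = q ^ b)
    (hord : Even (orderOf (q : ZMod p))) (hpn : n ^ 2 + n + 2 ≤ p)
    (h3 : ∀ k, 2 * k ≤ n → 3 ^ k < p)
    (K : Type*) [Field K] [NumberField K]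
    [IsCyclotomicExtension {p * r} ℚ K] (ζ : K) (hζ : IsPrimitiveRoot ζ (p * r))
    (f : Polynomial ℤ) (Y : K) (hYf : Y = Polynomial.aeval ζ f) (τ₀ : K →ₐ[ℚ] ℂ)
    (hY0 : τ₀ Y * (starRingEnd ℂ) (τ₀ Y) = n) :
    ∃ B ∈ Subring.closure {ζ ^ p}, ∃ i : ℕ, Y = B * ζ ^ (r * i) := by
  have hp : p.Prime := Fact.out
  have hq : q.Prime := Fact.out
  have hp0 := hp.pos
  have hN1 : 1 ≤ p * r := Nat.mul_pos hp0 hr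
  set N := p * r with hN
  have hα : IsPrimitiveRoot (ζ ^ r) p := hζ.pow hN1 (by rw [hN, mul_comm])
  have hβ : (ζ ^ p) ^ r = 1 := by rw [← pow_mul, ← hN]; exact hζ.pow_eq_one
  set α := ζ ^ r with hαd
  set β := ζ ^ p with hβd
  have hαN : α ^ N = 1 := by rw [hN, pow_mul, hα.pow_eq_one, one_pow]
  have hβN : β ^ N = 1 := by rw [hN, mul_comm, pow_mul, hβ, one_pow]
  -- splitting of ζ
  obtain ⟨x, y, hxy⟩ : ∃ x y : ℕ, ζ = α ^ x * β ^ y := by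
    obtain ⟨u, hu1, hu2⟩ := crt_nat p r 1 0 hpr
    obtain ⟨v, hv1, hv2⟩ := crt_nat p r 0 1 hpr
    obtain ⟨x, rfl⟩ := (Nat.modEq_zero_iff_dvd.1 hu2)
    obtain ⟨y, rfl⟩ := (Nat.modEq_zero_iff_dvd.1 hv1)
    refine ⟨x, y, ?_⟩
    rw [hαd, hβd, ← pow_mul, ← pow_mul, ← pow_add]
    conv_lhs => rw [← pow_one ζ]
    apply pow_modEq hζ.pow_eq_one
    rw [hN, ← Nat.modEq_and_modEq_iff_modEq_mul hpr]
    exact ⟨(Nat.ModEq.add hu1 hv1).symm, (Nat.ModEq.add hu2 hv2).symm⟩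
  let e : AddChar (ZMod p) K := AddChar.zmodChar p hα.pow_eq_one
  have he : e.IsPrimitive := AddChar.zmodChar_primitive_of_primitive_root p hα
  have heval : ∀ z : ZMod p, e z = α ^ z.val := fun z => AddChar.zmodChar_apply _ z
  have hecast : ∀ k : ℕ, e (k : ZMod p) = α ^ k := fun k => AddChar.zmodChar_apply' _ k
  have heN : ∀ z, e z ^ N = 1 := by
    intro z; rw [heval, ← pow_mul, mul_comm, pow_mul, hαN, one_pow]
  have hepow : ∀ (z : ZMod p) (k : ℕ), e z ^ k = e (k * z) := by
    intro z k
    rw [← AddChar.map_nsmul_eq_pow, nsmul_eq_mul]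
  -- σ_d
  have hσex : ∀ d : ZMod p, ∃ σ : K →+* K, d ≠ 0 → (∀ z, σ (e z) = e (d * z)) ∧ σ β = β := by
    intro d
    by_cases hd : d = 0
    · exact ⟨RingHom.id K, fun h => absurd hd h⟩
    obtain ⟨k, hk1, hk2⟩ := crt_nat p r d.val 1 hpr
    have hkd : (k : ZMod p) = d := by
      rw [(ZMod.natCast_eq_natCast_iff _ _ _).2 hk1, ZMod.natCast_zmod_val]
    have hkp : k.Coprime p := by
      rw [Nat.coprime_comm, hp.coprime_iff_not_dvd, ← ZMod.natCast_eq_zero_iff, hkd]; exact hd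
    have hkr : k.Coprime r := by
      have := hk2.gcd_eq; simpa [Nat.Coprime] using this
    obtain ⟨σ, hσ⟩ := exists_gal N K k (Nat.Coprime.mul_right hkp hkr)
    refine ⟨(σ : K ≃+* K), fun _ => ⟨fun z => ?_, ?_⟩⟩
    · have := hσ (e z) (heN z)
      rw [hepow, hkd] at this; exact this
    · have := hσ β hβN
      rw [pow_modEq hβ hk2, pow_one] at this; exact this
  choose σ hσ using hσex
  -- conj
  obtain ⟨c, hc⟩ := exists_gal N K (N - 1) (by
    obtain ⟨M, hM⟩ := Nat.exists_eq_add_of_le hN1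
    rw [hM, Nat.add_sub_cancel_left]; simp)
  have hc' : ∀ z : K, z ^ N = 1 → c z = z⁻¹ := by
    intro z hz
    rw [hc z hz]
    apply eq_inv_of_mul_eq_one_left
    rw [← pow_succ, Nat.sub_add_cancel hN1, hz]
  have hcζ := hc' ζ hζ.pow_eq_one
  have hcτ := conj_spec N K ζ hζ c hcζ
  -- ψ
  obtain ⟨j, hj⟩ := exists_half hp hq hpq hord
  obtain ⟨ψ, hψ⟩ := exists_gal N K (q ^ j) (Nat.Coprime.pow_left j
    (Nat.Coprime.mul_right ((Nat.coprime_primes hq hp).2 hpq.symm) hqr))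
  -- B
  set B : Subring K := Subring.closure {β} with hB
  have hβB : β ∈ B := Subring.subset_closure rfl
  have hBle : ∀ g : K →+* K, g β ∈ B → ∀ x ∈ B, g x ∈ B := by
    intro g hg x hx
    have : B ≤ B.comap g := by
      rw [hB, Subring.closure_le, Set.singleton_subset_iff]; exact hg
    exact this hx
  have hζi : IsIntegral ℤ ζ := hζ.isIntegral hN1
  have hBi : ∀ x ∈ B, IsIntegral ℤ x := by
    have : B ≤ (integralClosure ℤ K).toSubring := by
      rw [hB, Subring.closure_le, Set.singleton_subset_iff]
      exact hζi.pow p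
    exact fun x hx => this hx
  have hBσ : ∀ x ∈ B, ∀ d ≠ 0, σ d x = x := by
    intro x hx d hd
    have : B ≤ RingHom.eqLocus (σ d) (RingHom.id K) := by
      rw [hB, Subring.closure_le, Set.singleton_subset_iff]
      exact (hσ d hd).2
    exact this hx
  -- decomposition
  have hdec : ∀ g : Polynomial ℤ, ∃ a : ZMod p → K, (∀ i, a i ∈ B) ∧
      Polynomial.aeval ζ g = ∑ i, a i * e i := by
    intro g
    induction g using Polynomial.induction_on' with
    | add g h ihg ihh =>
      obtain ⟨a, ha, ha'⟩ := ihg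
      obtain ⟨a2, ha2, ha2'⟩ := ihh
      refine ⟨fun i => a i + a2 i, fun i => B.add_mem (ha i) (ha2 i), ?_⟩
      rw [map_add, ha', ha2', ← Finset.sum_add_distrib]
      exact Finset.sum_congr rfl fun i _ => by ring
    | monomial k m =>
      refine ⟨fun i => if i = ((x * k : ℕ) : ZMod p) then (m : K) * β ^ (y * k) else 0, ?_, ?_⟩
      · intro i
        dsimp only
        split_ifs
        · exact B.mul_mem (intCast_mem B m) (B.pow_mem hβB _)
        · exact B.zero_mem
      · rw [Finset.sum_eq_single ((x * k : ℕ) : ZMod p)]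
        · beta_reduce
          rw [if_pos rfl, hecast, Polynomial.aeval_monomial]
          conv_lhs => rw [hxy]
          rw [mul_pow, ← pow_mul α, ← pow_mul β]
          simp; ring
        · intro i _ hi; beta_reduce; rw [if_neg hi, zero_mul]
        · simp
  obtain ⟨a, ha, haY⟩ := hdec f
  have hYi : IsIntegral ℤ Y := by
    rw [hYf, haY]
    refine IsIntegral.sum _ fun i _ => (hBi _ (ha i)).mul ?_
    rw [heval]; exact (hζi.pow r).pow _
  have hYc : Y * c Y = ((q ^ b : ℕ) : K) := by
    have : τ₀ (Y * c Y) = τ₀ ((q ^ b : ℕ) : K) := by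
      rw [map_mul, hcτ, hY0, map_natCast, hn]
    exact (τ₀ : K →+* ℂ).injective this
  obtain ⟨k, hk⟩ := psi_unit N K ζ hζ q j b ψ (hψ ζ hζ.pow_eq_one) c hcζ Y hYi hYc
  have hζk : ζ ^ k = β ^ (y * k) * e ((x * k : ℕ) : ZMod p) := by
    conv_lhs => rw [hxy]
    rw [mul_pow, ← pow_mul α, ← pow_mul β, hecast, mul_comm]
  obtain ⟨w, hw, hwk⟩ : ∃ w ∈ B, ψ Y = w * e ((x * k : ℕ) : ZMod p) * Y := by
    rcases hk with hk | hk
    · exact ⟨_, B.pow_mem hβB (y * k), by rw [hk, hζk]⟩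
    · exact ⟨_, B.neg_mem (B.pow_mem hβB (y * k)), by rw [hk, hζk]; ring⟩
  have hinvβ : β⁻¹ ∈ B := by
    have : β⁻¹ = β ^ (r - 1) := by
      symm
      apply eq_inv_of_mul_eq_one_left
      rw [← pow_succ, Nat.sub_add_cancel hr, hβ]
    rw [this]; exact B.pow_mem hβB _
  obtain ⟨B0, hB0, i, hi⟩ := core_descent e he σ (fun d hd => (hσ d hd).1) ((c : K ≃+* K) : K →+* K)
    (fun z => by
      have := hc' (e z) (heN z)
      rw [← AddChar.map_neg_eq_inv] at this; exact this)
    hcτ B hBi hBσ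
    (hBle _ (by have := hc' β hβN; change c β ∈ B; rw [this]; exact hinvβ))
    ((ψ : K ≃+* K) : K →+* K)
    (fun z => by
      have := hψ (e z) (heN z)
      rw [hepow, hj, neg_one_mul] at this; exact this)
    (hBle _ (by have := hψ β hβN; change ψ β ∈ B; rw [this]; exact B.pow_mem hβB _))
    Y a ha (hYf.trans haY) n (by rw [hn]; exact Nat.one_le_pow _ _ hq.pos) hpn h3
    (by rw [hn]; exact hYc) w hw _ hwk
  refine ⟨B0, hB0, i.val, ?_⟩
  rw [hi, heval, hαd, ← pow_mul]

theorem weil_aux (p q : ℕ) (hp : p.Prime) (hq : q.Prime) (hpq : p ≠ q)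
    (b : ℕ) (hb : 1 ≤ b) (n : ℕ) (hn : n = q ^ b)
    (r : ℕ) (hr : 1 ≤ r) (K : Type) [Field K] [NumberField K]
    [NeZero (p * r)] [IsCyclotomicExtension {p * r} ℚ K] (hgcd : Nat.gcd r (p * q) = 1)
    (Y : ℂ)
    (hY : Y ∈ Algebra.adjoin ℤ
      ({Complex.exp (2 * Real.pi * Complex.I / ((p : ℂ) * (r : ℂ)))} : Set ℂ))
    (hYn : Y * (starRingEnd ℂ) Y = (n : ℂ))
    (hord : Even (orderOf (q : ZMod p)))
    (hbig : (p : ℝ) > max ((3 : ℝ) ^ ((n : ℝ) / 2)) ((n : ℝ) ^ 2 + (n : ℝ) + 1)) :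
    ∃ η : ℂ, (∃ k : ℕ, 0 < k ∧ η ^ k = 1) ∧
      Y * η ∈ Algebra.adjoin ℤ
        ({Complex.exp (2 * Real.pi * Complex.I / (r : ℂ))} : Set ℂ) := by
  have : Fact p.Prime := ⟨hp⟩
  have : Fact q.Prime := ⟨hq⟩
  have hN : p * r ≠ 0 := mul_ne_zero hp.ne_zero (by omega)
  have hpr : p.Coprime r := (Nat.Coprime.coprime_mul_right_right (show Nat.Coprime r (p * q) from hgcd)).symm
  have hqr : q.Coprime r := (Nat.Coprime.coprime_mul_left_right (show Nat.Coprime r (p * q) from hgcd)).symm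
  obtain ⟨hb1, hb2⟩ := max_lt_iff.1 hbig
  have hpn : n ^ 2 + n + 2 ≤ p := by
    have : n ^ 2 + n + 1 < p := by exact_mod_cast hb2
    omega
  have h3 : ∀ k, 2 * k ≤ n → 3 ^ k < p := by
    intro k hk
    have h1 : (3 : ℝ) ^ (k : ℝ) ≤ (3 : ℝ) ^ ((n : ℝ) / 2) := by
      apply Real.rpow_le_rpow_of_exponent_le (by norm_num)
      have : (2 : ℝ) * k ≤ n := by exact_mod_cast hk
      linarith
    rw [Real.rpow_natCast] at h1
    exact_mod_cast h1.trans_lt hb1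
  let ι : K →ₐ[ℚ] ℂ := IsAlgClosed.lift
  set Z : ℂ := Complex.exp (2 * Real.pi * Complex.I / ((p : ℂ) * (r : ℂ))) with hZ
  have hZ' : IsPrimitiveRoot Z (p * r) := by
    have := Complex.isPrimitiveRoot_exp (p * r) hN
    push_cast at this
    exact this
  have hz := IsCyclotomicExtension.zeta_spec (p * r) ℚ K
  have hιz : IsPrimitiveRoot (ι (IsCyclotomicExtension.zeta (p * r) ℚ K)) (p * r) :=
    hz.map_of_injective ι.injective
  obtain ⟨k, -, hk⟩ := hιz.eq_pow_of_pow_eq_one hZ'.pow_eq_one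
  rw [← map_pow] at hk
  set ζ : K := IsCyclotomicExtension.zeta (p * r) ℚ K ^ k with hζd
  have hζ : IsPrimitiveRoot ζ (p * r) := by
    apply IsPrimitiveRoot.of_map_of_injective (f := ι) _ ι.injective
    rw [hk]; exact hZ'
  rw [Algebra.adjoin_singleton_eq_range_aeval] at hY
  obtain ⟨f, hf⟩ := hY
  have hYι : ι (Polynomial.aeval ζ f) = Y := by
    rw [← hf]
    have := Polynomial.aeval_algHom_apply (ι.restrictScalars ℤ) ζ f
    simp only [AlgHom.coe_restrictScalars', hk] at this
    exact this.symm
  obtain ⟨B0, hB0, i, hi⟩ := descent_K p q r b n hpq hr hpr hqr hn hord hpn h3 K ζ hζ f _ rfl ι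
    (by rw [hYι]; exact hYn)
  have hβ : ι (ζ ^ p) = Complex.exp (2 * Real.pi * Complex.I / (r : ℂ)) := by
    rw [map_pow, hk, hZ, ← Complex.exp_nat_mul]
    congr 1
    have : (p : ℂ) ≠ 0 := by exact_mod_cast hp.ne_zero
    have : (r : ℂ) ≠ 0 := by exact_mod_cast (show r ≠ 0 by omega)
    field_simp
  have hZ0 : Z ≠ 0 := Complex.exp_ne_zero _
  refine ⟨(Z ^ (r * i))⁻¹, ⟨p * r, Nat.pos_of_ne_zero hN, ?_⟩, ?_⟩
  · rw [inv_pow, ← pow_mul, mul_comm, pow_mul, hZ'.pow_eq_one, one_pow, inv_one]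
  · rw [← hYι, hi, map_mul, map_pow, hk, mul_assoc (ι B0), mul_inv_cancel₀ (pow_ne_zero _ hZ0), mul_one]
    have hle : Subring.closure {ζ ^ p} ≤ (Algebra.adjoin ℤ
        ({Complex.exp (2 * Real.pi * Complex.I / (r : ℂ))} : Set ℂ)).toSubring.comap (ι : K →+* ℂ) := by
      rw [Subring.closure_le, Set.singleton_subset_iff]
      change ι (ζ ^ p) ∈ Algebra.adjoin ℤ _
      rw [hβ]
      exact Algebra.subset_adjoin rfl
    exact hle hB0

theorem weil_number_descent (p q : ℕ) (hp : p.Prime) (hq : q.Prime) (hpq : p ≠ q)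
    (b : ℕ) (hb : 1 ≤ b) (n : ℕ) (hn : n = q ^ b)
    (r : ℕ) (hr : 1 ≤ r) (hgcd : Nat.gcd r (p * q) = 1)
    (Y : ℂ)
    (hY : Y ∈ Algebra.adjoin ℤ
      ({Complex.exp (2 * Real.pi * Complex.I / ((p : ℂ) * (r : ℂ)))} : Set ℂ))
    (hYn : Y * (starRingEnd ℂ) Y = (n : ℂ))
    (hord : Even (orderOf (q : ZMod p)))
    (hbig : (p : ℝ) > max ((3 : ℝ) ^ ((n : ℝ) / 2)) ((n : ℝ) ^ 2 + (n : ℝ) + 1)) :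
    ∃ η : ℂ, (∃ k : ℕ, 0 < k ∧ η ^ k = 1) ∧
      Y * η ∈ Algebra.adjoin ℤ
        ({Complex.exp (2 * Real.pi * Complex.I / (r : ℂ))} : Set ℂ) := by
  have : NeZero (p * r) := ⟨mul_ne_zero hp.ne_zero (by omega)⟩
  have : NeZero ((p * r : ℕ) : ℚ) := NeZero.charZero
  have : IsCyclotomicExtension {p * r} ℚ (CyclotomicField (p * r) ℚ) :=
    CyclotomicField.isCyclotomicExtension (p * r) ℚ
  exact weil_aux p q hp hq hpq b hb n hn r hr (CyclotomicField (p * r) ℚ) hgcd Y hY hYn hord hbig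
end

section
/- Let m be a positive integer, let ζ_m = e^{2πi/m} ∈ ℂ, and let Y be a nonzero element of ℤ[ζ_m]. Then 𝓜(Y) := (1/φ(m)) · ∑_{σ ∈ Gal(ℚ(ζ_m)/ℚ)} σ(Y·conj(Y)) ≥ 1, where conj denotes complex conjugation and φ is Euler's totient function. (Each σ(Y·conj(Y)) is a nonnegative real algebraic number, so the sum is a real number.) -/
open Complex

/-- For a nonzero `Y ∈ ℤ[ζ_m]`, the quantity
`𝓜(Y) = (1/φ(m)) ∑_{σ ∈ Gal(ℚ(ζ_m)/ℚ)} σ(Y·conj(Y))` is a real number `≥ 1`. -/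
theorem M_of_nonzero_ge_one (m : ℕ) (hm : 1 ≤ m)
    (ζ : ℂ) (hζ : ζ = Complex.exp (2 * Real.pi * Complex.I / (m : ℂ)))
    (Y : ℂ) (hY : Y ∈ Algebra.adjoin ℤ ({ζ} : Set ℂ)) (hY0 : Y ≠ 0)
    (K : IntermediateField ℚ ℂ) (hK : K = IntermediateField.adjoin ℚ ({ζ} : Set ℂ))
    (hmem : Y * (starRingEnd ℂ) Y ∈ K)
    [Fintype (K ≃ₐ[ℚ] K)] :
    ((((Nat.totient m : ℂ))⁻¹ *
        ∑ σ : K ≃ₐ[ℚ] K, ((σ ⟨Y * (starRingEnd ℂ) Y, hmem⟩ : K) : ℂ)).im = 0) ∧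
    (1 : ℝ) ≤ (((Nat.totient m : ℂ))⁻¹ *
        ∑ σ : K ≃ₐ[ℚ] K, ((σ ⟨Y * (starRingEnd ℂ) Y, hmem⟩ : K) : ℂ)).re := by
  have hm0 : m ≠ 0 := by omega
  have : NeZero m := ⟨hm0⟩
  have hprim : IsPrimitiveRoot ζ m := hζ ▸ Complex.isPrimitiveRoot_exp m hm0
  have hζK : ζ ∈ K := hK ▸ IntermediateField.mem_adjoin_simple_self ℚ ζ
  have hcyc : IsCyclotomicExtension {m} ℚ K :=
    (IntermediateField.isCyclotomicExtension_singleton_iff_eq_adjoin (n := m) (K := ℚ) (L := ℂ)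
      (F := K) (hζ := hprim)).mpr hK
  have : FiniteDimensional ℚ K := IsCyclotomicExtension.finiteDimensional {m} ℚ K
  have : IsGalois ℚ K := IsCyclotomicExtension.isGalois {m} ℚ K
  have hcard : Fintype.card (K ≃ₐ[ℚ] K) = Nat.totient m := by
    rw [← Nat.card_eq_fintype_card, IsGalois.card_aut_eq_finrank]
    exact IsCyclotomicExtension.finrank K (Polynomial.cyclotomic.irreducible_rat (by omega))
  have key : ∃ y yc : K, (y : ℂ) = Y ∧ (yc : ℂ) = (starRingEnd ℂ) Y ∧ IsIntegral ℤ y ∧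
      IsIntegral ℤ yc ∧ ∀ σ : K ≃ₐ[ℚ] K, ((σ yc : K) : ℂ) = (starRingEnd ℂ) ((σ y : K) : ℂ) := by
    clear hmem hY0
    induction hY using Algebra.adjoin_induction with
    | mem x hx =>
      obtain rfl : x = ζ := by simpa using hx
      have hconj : ∀ z : ℂ, z ^ m = 1 → z⁻¹ = (starRingEnd ℂ) z := fun z hz =>
        Complex.inv_eq_conj (Complex.norm_eq_one_of_pow_eq_one hz hm0)
      have hpow : (⟨x, hζK⟩ : K) ^ m = 1 := Subtype.ext (by simpa using hprim.pow_eq_one)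
      refine ⟨⟨x, hζK⟩, (⟨x, hζK⟩ : K)⁻¹, rfl, ?_, ?_, ?_, ?_⟩
      · simpa using hconj x hprim.pow_eq_one
      · exact IsIntegral.of_pow (by omega) (hpow ▸ isIntegral_one)
      · exact IsIntegral.of_pow (n := m) (by omega) (by rw [inv_pow, hpow, inv_one]; exact isIntegral_one)
      · intro σ
        have h2 : ((σ ⟨x, hζK⟩ : K) : ℂ) ^ m = 1 := by
          have : (σ ⟨x, hζK⟩) ^ m = 1 := by rw [← map_pow, hpow, map_one]
          exact_mod_cast congrArg (fun t : K => (t : ℂ)) this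
        rw [map_inv₀, ← hconj _ h2]; simp
    | algebraMap r =>
      refine ⟨(r : K), (r : K), by simp, by simp, ?_, ?_, ?_⟩
      · exact isIntegral_algebraMap (R := ℤ) (x := r)
      · exact isIntegral_algebraMap (R := ℤ) (x := r)
      · intro σ; simp
    | add a b _ _ ha hb =>
      obtain ⟨y, yc, rfl, h2, h3, h4, h5⟩ := ha
      obtain ⟨z, zc, rfl, g2, g3, g4, g5⟩ := hb
      exact ⟨y + z, yc + zc, by simp, by simp [h2, g2], h3.add g3, h4.add g4,
        fun σ => by simp [h5, g5]⟩
    | mul a b _ _ ha hb =>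
      obtain ⟨y, yc, rfl, h2, h3, h4, h5⟩ := ha
      obtain ⟨z, zc, rfl, g2, g3, g4, g5⟩ := hb
      exact ⟨y * z, yc * zc, by simp, by simp [h2, g2], h3.mul g3, h4.mul g4,
        fun σ => by simp [h5, g5]⟩
  obtain ⟨y, yc, hy, hyc, hiy, hiyc, hσ⟩ := key
  have hw : (⟨Y * (starRingEnd ℂ) Y, hmem⟩ : K) = y * yc := Subtype.ext (by simp [hy, hyc])
  have hy0 : y ≠ 0 := by rintro rfl; exact hY0 (by simpa using hy.symm)
  have hyc0 : yc ≠ 0 := by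
    rintro rfl; exact hY0 (by simpa using hyc.symm)
  have hval : ∀ σ : K ≃ₐ[ℚ] K, ((σ (y * yc) : K) : ℂ) = ((Complex.normSq (σ y : K) : ℝ) : ℂ) := by
    intro σ
    rw [map_mul, Complex.normSq_eq_conj_mul_self, ← hσ]
    simp [mul_comm]
  have hpos : ∀ σ : K ≃ₐ[ℚ] K, 0 < Complex.normSq (σ y : K) := by
    intro σ
    rw [Complex.normSq_pos]
    simpa using hy0
  have hprod : 1 ≤ ∏ σ : K ≃ₐ[ℚ] K, Complex.normSq (σ y : K) := by
    have hN := Algebra.norm_eq_prod_automorphisms ℚ (y * yc)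
    have hI : IsIntegral ℤ (Algebra.norm ℚ (y * yc)) := Algebra.isIntegral_norm ℚ (hiy.mul hiyc)
    obtain ⟨k, hk⟩ := IsIntegrallyClosed.isIntegral_iff.mp hI
    have h1 : ((∏ σ : K ≃ₐ[ℚ] K, Complex.normSq (σ y : K) : ℝ) : ℂ) = (k : ℂ) := by
      have := congrArg (fun t : K => (t : ℂ)) hN
      rw [← hk] at this
      simp only [Complex.ofReal_prod, ← hval]
      rw [← IntermediateField.coe_prod]
      have hR : ((algebraMap ℚ K (algebraMap ℤ ℚ k) : K) : ℂ) = (k : ℂ) := by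
        rw [← IsScalarTower.algebraMap_apply ℤ ℚ K]
        simp
      rw [← hR, this]
      congr!
    have h2 : ∏ σ : K ≃ₐ[ℚ] K, Complex.normSq (σ y : K) = (k : ℝ) := by exact_mod_cast h1
    have h3 : 0 < ∏ σ : K ≃ₐ[ℚ] K, Complex.normSq (σ y : K) :=
      Finset.prod_pos fun σ _ => hpos σ
    rw [h2] at h3 ⊢
    have h4 : 0 < k := by exact_mod_cast h3
    exact_mod_cast h4
  have hsum : (Nat.totient m : ℝ) ≤ ∑ σ : K ≃ₐ[ℚ] K, Complex.normSq (σ y : K) := by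
    have h1 := Real.log_nonneg hprod
    rw [Real.log_prod (fun σ _ => (hpos σ).ne')] at h1
    have h2 : ∑ σ : K ≃ₐ[ℚ] K, Real.log (Complex.normSq (σ y : K)) ≤
        ∑ σ : K ≃ₐ[ℚ] K, (Complex.normSq (σ y : K) - 1) :=
      Finset.sum_le_sum fun σ _ => Real.log_le_sub_one_of_pos (hpos σ)
    rw [Finset.sum_sub_distrib] at h2
    simp [hcard] at h2
    linarith
  have hfin : ((Nat.totient m : ℂ))⁻¹ *
        ∑ σ : K ≃ₐ[ℚ] K, ((σ ⟨Y * (starRingEnd ℂ) Y, hmem⟩ : K) : ℂ) =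
      (((Nat.totient m : ℝ)⁻¹ * ∑ σ : K ≃ₐ[ℚ] K, Complex.normSq (σ y : K) : ℝ) : ℂ) := by
    rw [hw]
    simp only [hval]
    push_cast
    rfl
  rw [hfin]
  refine ⟨Complex.ofReal_im _, ?_⟩
  rw [Complex.ofReal_re]
  have hφ : (0 : ℝ) < Nat.totient m := by exact_mod_cast Nat.totient_pos.mpr hm
  rw [inv_mul_eq_div, le_div_iff₀ hφ]
  linarith
end

section
/- Let p ≥ 5 be a prime and let A be a symmetric subset of 𝔽_p with 1 ≤ |A| ≤ 3. Then A has a unique difference. -/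
open Finset Pointwise

/-- A nonempty subset `A` of `𝔽_p` has a unique difference if there is `x ∈ 𝔽_p`
represented exactly once as an ordered difference `a - b` with `a, b ∈ A`. -/
def HasUniqueDifference {p : ℕ} (A : Finset (ZMod p)) : Prop :=
  ∃ x : ZMod p, ((A ×ˢ A).filter fun ab => ab.1 - ab.2 = x).card = 1

/-- Let `p ≥ 5` be a prime and let `A` be a symmetric subset of `𝔽_p` with
`1 ≤ |A| ≤ 3`. Then `A` has a unique difference. -/
theorem small_symmetric_has_unique_difference (p : ℕ) (hp : p.Prime) (hp5 : 5 ≤ p)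
    (A : Finset (ZMod p)) (hsym : A = -A)
    (h1 : 1 ≤ A.card) (h3 : A.card ≤ 3) :
    HasUniqueDifference A := by
  haveI : Fact p.Prime := ⟨hp⟩
  have hneg : ∀ b ∈ A, -b ∈ A := by
    intro b hb
    rw [hsym] at hb
    exact Finset.mem_neg'.1 hb
  have key : ∀ n : ℕ, 0 < n → n < 5 → ((n : ℕ) : ZMod p) ≠ 0 := by
    intro n h0 h5 h
    rw [ZMod.natCast_eq_zero_iff] at h
    have := Nat.le_of_dvd h0 h
    omega
  have k2 : (2 : ZMod p) ≠ 0 := by exact_mod_cast key 2 (by norm_num) (by norm_num)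
  have k3 : (3 : ZMod p) ≠ 0 := by exact_mod_cast key 3 (by norm_num) (by norm_num)
  have k4 : (4 : ZMod p) ≠ 0 := by exact_mod_cast key 4 (by norm_num) (by norm_num)
  by_cases hz : ∃ a ∈ A, a ≠ 0
  · obtain ⟨a, ha, ha0⟩ := hz
    have m2 : 2 * a ≠ 0 := mul_ne_zero k2 ha0
    have m3 : 3 * a ≠ 0 := mul_ne_zero k3 ha0
    have m4 : 4 * a ≠ 0 := mul_ne_zero k4 ha0
    have hane : a ≠ -a := fun h => m2 (by linear_combination h)
    have hall : ∀ b ∈ A, b = a ∨ b = -a ∨ b = 0 := by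
      intro b hb
      by_contra! hcon
      obtain ⟨c1, c2, c3⟩ := hcon
      have hb2 : b ≠ -b := fun h => mul_ne_zero k2 c3 (by linear_combination h)
      have c4 : a ≠ -b := fun h => c2 (by rw [h, neg_neg])
      have c5 : -a ≠ -b := fun h => c1 (neg_injective h).symm
      have hsub : ({a, -a, b, -b} : Finset (ZMod p)) ⊆ A := by
        intro x hx
        simp only [Finset.mem_insert, Finset.mem_singleton] at hx
        rcases hx with rfl | rfl | rfl | rfl
        · exact ha
        · exact hneg _ ha
        · exact hb
        · exact hneg _ hb
      have hc : ({a, -a, b, -b} : Finset (ZMod p)).card = 4 := by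
        rw [Finset.card_insert_of_notMem, Finset.card_insert_of_notMem,
          Finset.card_pair hb2]
        · simp only [Finset.mem_insert, Finset.mem_singleton, not_or]
          exact ⟨c2.symm, c5⟩
        · simp only [Finset.mem_insert, Finset.mem_singleton, not_or]
          exact ⟨hane, c1.symm, c4⟩
      have := Finset.card_le_card hsub
      omega
    refine ⟨2 * a, Finset.card_eq_one.2 ⟨(a, -a), ?_⟩⟩
    ext ⟨x, y⟩
    simp only [Finset.mem_filter, Finset.mem_product, Finset.mem_singleton, Prod.mk.injEq]
    constructor
    · rintro ⟨⟨hx, hy⟩, h⟩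
      rcases hall x hx with rfl | rfl | rfl <;> rcases hall y hy with e | e | e <;>
        subst e <;> first
        | exact ⟨rfl, rfl⟩
        | exact absurd (by linear_combination h) ha0
        | exact absurd (by linear_combination -h) ha0
        | exact absurd (by linear_combination h) m2
        | exact absurd (by linear_combination -h) m2
        | exact absurd (by linear_combination -h) m3
        | exact absurd (by linear_combination -h) m4
    · rintro ⟨rfl, rfl⟩
      exact ⟨⟨ha, hneg _ ha⟩, by ring⟩
  · push Not at hz
    obtain ⟨c, hc⟩ := Finset.card_pos.1 h1
    have c0 := hz c hc
    subst c0
    refine ⟨0, Finset.card_eq_one.2 ⟨(0, 0), ?_⟩⟩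
    ext ⟨x, y⟩
    simp only [Finset.mem_filter, Finset.mem_product, Finset.mem_singleton, Prod.mk.injEq]
    constructor
    · rintro ⟨⟨hx, hy⟩, _⟩
      exact ⟨hz x hx, hz y hy⟩
    · rintro ⟨rfl, rfl⟩
      exact ⟨⟨hc, hc⟩, sub_zero _⟩
end
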